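/- Let n, k ∈ ℕ with 2 ≤ 2k < n. Let u ∈ C^{2k}(ℝⁿ) be radial, satisfy Δ^k u = |u|^{2*−2}·u on ℝⁿ, and assume that |∇^l u| ∈ L^{2*(l)}(ℝⁿ) for every integer 0 ≤ l ≤ k, where 2*(l) := 2n/(n−2(k−l)). Then there exist μ > 0 and ε ∈ {−1, 0, +1} such that u(x) = ε·(μ/(μ² + a_{n,k}|x|²))^{(n−2k)/2} for all x ∈ ℝⁿ. -/

import Mathlib

/-!
The function `u` is reduced to its radial profile `φ(r) = u(r e)`, which solves a chain of `k`
radial Poisson equations, `φ₀ = φ`, `φ_{i+1} = -Δ φ_i`, closed up by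
`φ_k = (-1)^k |φ|^q φ` with `q = 2k/α` and `α = (n-2k)/2`. The integrability of `u` and `∇u` gives
`φ = o(r^{-α})` at infinity (`decay_of_integrable`). The explicit bubbles solve the same problem if
`k` is even (`exists_bubble`), and so does the zero function for every `k`. Hence everything
follows from a uniqueness theorem, `Sol.unique`: two solutions of the radial problem with this decay
coincide if they agree at the origin, or if `k` is odd. In particular `u = 0` for odd `k`: there
`Δ^k` has the wrong sign for nontrivial solutions.

Uniqueness is proved by counting sign changes. Let `w_i` be the differences of the two chains; they
all tend to zero at infinity. By Rolle's theorem for `w_i` and for the flux `r^{n-1} w_i'`, the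
function `w_{i+1} = -Δ w_i` has at least as many sign changes as `w_i` (`RStep.alt`), and one more
if `w_i` also vanishes at the origin (`RStep.alt_gain`). Since `t ↦ |t|^q t` is increasing, `w_k`
has the sign of `(-1)^k w_0`. If `k` is even and `w_0(0) = 0`, one turn through the chain therefore
increases the number of sign changes; if `k` is odd, it produces an alternation of the same length
starting with the opposite sign, and the two together are again longer by one (`Alt.merge`). So
`w_0 ≠ 0` would have infinitely many zeros. These accumulate at a positive radius, at the origin or
at infinity. In each case Rolle's theorem makes all `w_i` and their fluxes vanish there, and
`UC.eq_zero` gives `w_0 = 0`: by Grönwall's inequality at a positive radius, by contraction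
estimates for the integrated equations at the origin and at infinity. The estimate at infinity
needs decay faster than `r^{-α}`, which `Sol.strong_decay` supplies.
-/

open MeasureTheory Metric Filter Topology Real

noncomputable section

def lap {n : ℕ} (u : EuclideanSpace ℝ (Fin n) → ℝ) : EuclideanSpace ℝ (Fin n) → ℝ :=
  fun x => ∑ i : Fin n, iteratedFDeriv ℝ 2 u x (fun _ => EuclideanSpace.single i 1)

def iterLap {n : ℕ} (k : ℕ) (u : EuclideanSpace ℝ (Fin n) → ℝ) :
    EuclideanSpace ℝ (Fin n) → ℝ :=
  lap^[k] u

def twoStar (n k : ℕ) : ℝ := 2 * n / ((n : ℝ) - 2 * k)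

def ank (n k : ℕ) : ℝ :=
  (∏ j ∈ Finset.range (2 * k), ((n : ℝ) + 2 * ((j : ℝ) - (k : ℝ)))) ^ (-(1 : ℝ) / (k : ℝ))

def Ubub (n k : ℕ) (x : EuclideanSpace ℝ (Fin n)) : ℝ :=
  (1 / (1 + ank n k * ‖x‖ ^ 2)) ^ (((n : ℝ) - 2 * k) / 2)

def BlowUpSetup (n k : ℕ) (M : ℝ) (lam : ℕ → ℝ)
    (u : ℕ → EuclideanSpace ℝ (Fin n) → ℝ) : Prop :=
  (∀ i, 0 < lam i) ∧ Filter.Tendsto lam Filter.atTop (nhds 0) ∧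
  (∀ i, ContDiff ℝ (2 * k : ℕ) (u i)) ∧
  (∀ i, ∀ x y : EuclideanSpace ℝ (Fin n), ‖x‖ = ‖y‖ → u i x = u i y) ∧
  (∀ i, ∀ x ∈ Metric.ball (0 : EuclideanSpace ℝ (Fin n)) 1,
    iterLap k (u i) x - lam i * u i x = |u i x| ^ (twoStar n k - 2) * u i x) ∧
  (∀ i, ∀ x : EuclideanSpace ℝ (Fin n), ‖x‖ = 1 → ∀ j < k,
    iteratedFDeriv ℝ j (u i) x (fun _ => x) = 0) ∧
  (∀ i, ∃ x ∈ Metric.closedBall (0 : EuclideanSpace ℝ (Fin n)) 1, u i x ≠ 0) ∧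
  (∀ i, (∫ x in Metric.ball (0 : EuclideanSpace ℝ (Fin n)) 1, |u i x| ^ twoStar n k)
      ≤ M ^ twoStar n k)

def CLocConv {n : ℕ} (m : ℕ) (S : Set (EuclideanSpace ℝ (Fin n)))
    (f : ℕ → EuclideanSpace ℝ (Fin n) → ℝ) (g : EuclideanSpace ℝ (Fin n) → ℝ) : Prop :=
  ∀ K : Set (EuclideanSpace ℝ (Fin n)), K ⊆ S → IsCompact K → ∀ j ≤ m,
    Filter.Tendsto
      (fun i => ⨆ x : K, ‖iteratedFDeriv ℝ j (f i) (x : EuclideanSpace ℝ (Fin n))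
        - iteratedFDeriv ℝ j g (x : EuclideanSpace ℝ (Fin n))‖)
      Filter.atTop (nhds 0)

def Concentration (n k : ℕ) (u : ℕ → EuclideanSpace ℝ (Fin n) → ℝ)
    (ν : ℕ → ℝ) (ε₀ : ℝ) : Prop :=
  (∀ i, 0 < ν i) ∧ Filter.Tendsto ν Filter.atTop (nhds 0) ∧ (ε₀ = 1 ∨ ε₀ = -1) ∧
  CLocConv (2 * k) {(0 : EuclideanSpace ℝ (Fin n))}ᶜ
    (fun i z => (ν i) ^ (((n : ℝ) - 2 * k) / 2) * u i ((ν i) • z))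
    (fun z => ε₀ * Ubub n k z) ∧
  Filter.Tendsto (fun R : ℝ => Filter.limsup (fun i =>
      ⨆ x : {x : EuclideanSpace ℝ (Fin n) //
        x ∈ Metric.ball (0 : EuclideanSpace ℝ (Fin n)) 1 ∧ R * ν i ≤ ‖x‖},
        ‖(x : EuclideanSpace ℝ (Fin n))‖ ^ (((n : ℝ) - 2 * k) / 2)
          * |u i (x : EuclideanSpace ℝ (Fin n))|) Filter.atTop)
    Filter.atTop (nhds 0)

def Tfun (n k : ℕ) (u : EuclideanSpace ℝ (Fin n) → ℝ) (x : EuclideanSpace ℝ (Fin n)) : ℝ :=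
  (((n : ℝ) - 2 * k) / 2) * u x + fderiv ℝ u x x

def ndS {n : ℕ} (u : EuclideanSpace ℝ (Fin n) → ℝ) (x : EuclideanSpace ℝ (Fin n)) : ℝ :=
  fderiv ℝ u x (‖x‖⁻¹ • x)

def halfLapSq {n : ℕ} (k : ℕ) (u : EuclideanSpace ℝ (Fin n) → ℝ)
    (x : EuclideanSpace ℝ (Fin n)) : ℝ :=
  if k % 2 = 0 then (iterLap (k / 2) u x) ^ 2 else ‖gradient (iterLap (k / 2) u) x‖ ^ 2

def Sfun (n k : ℕ) (u : EuclideanSpace ℝ (Fin n) → ℝ) (x : EuclideanSpace ℝ (Fin n)) : ℝ :=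
  (∑ i ∈ Finset.range (k / 2),
    (-(ndS (iterLap (k - i - 1) u) x) * iterLap i (Tfun n k u) x
      + iterLap (k - i - 1) u x * ndS (iterLap i (Tfun n k u)) x))
  - (if k % 2 = 1 then ndS (iterLap (k / 2) u) x * iterLap (k / 2) (Tfun n k u) x else 0)

def sphVol (n : ℕ) : ℝ :=
  (μH[(n : ℝ) - 1] (Metric.sphere (0 : EuclideanSpace ℝ (Fin n)) 1)).toReal

def Cnk (n k : ℕ) : ℝ :=
  1 / (((n : ℝ) - 2) * sphVol n *
    ∏ i ∈ Finset.Icc 1 (k - 1), (((n : ℝ) - 2 * k + 2 * ((i : ℝ) - 1)) * (2 * (k : ℝ) - 2 * (i : ℝ))))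

/-! ### Radial Poisson equations and sign changes -/

/-- The radial equation `-ΔW = g` in dimension `n`, as a first-order system on `(0, ∞)`:
`P r = -r ^ (n - 1) * W' r` is the inward flux through the sphere of radius `r`, it vanishes at
the origin, and `P' = r ^ (n - 1) * g`. -/
structure RStep (n : ℕ) (W P g : ℝ → ℝ) : Prop where
  cW : ContinuousOn W (Set.Ici 0)
  cP : ContinuousOn P (Set.Ici 0)
  P0 : P 0 = 0
  dW : ∀ r > 0, HasDerivAt W (-(P r / r ^ (n - 1))) r
  dP : ∀ r > 0, HasDerivAt P (r ^ (n - 1) * g r) r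

lemma RStep.neg {n : ℕ} {W P g : ℝ → ℝ} (h : RStep n W P g) :
    RStep n (fun r => -W r) (fun r => -P r) (fun r => -g r) where
  cW := h.cW.neg
  cP := h.cP.neg
  P0 := by simp [h.P0]
  dW r hr := ((h.dW r hr).fun_neg).congr_deriv (by ring)
  dP r hr := ((h.dP r hr).fun_neg).congr_deriv (by ring)

lemma RStep.const_mul {n : ℕ} {W P g : ℝ → ℝ} (c : ℝ) (h : RStep n W P g) :
    RStep n (fun r => c * W r) (fun r => c * P r) (fun r => c * g r) where
  cW := h.cW.const_mul c
  cP := h.cP.const_mul c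
  P0 := by simp [h.P0]
  dW r hr := ((h.dW r hr).const_mul c).congr_deriv (by ring)
  dP r hr := ((h.dP r hr).const_mul c).congr_deriv (by ring)

lemma RStep.sub {n : ℕ} {W P g W' P' g' : ℝ → ℝ} (h : RStep n W P g) (h' : RStep n W' P' g') :
    RStep n (fun r => W r - W' r) (fun r => P r - P' r) (fun r => g r - g' r) where
  cW := h.cW.sub h'.cW
  cP := h.cP.sub h'.cP
  P0 := by simp [h.P0, h'.P0]
  dW r hr := ((h.dW r hr).fun_sub (h'.dW r hr)).congr_deriv (by ring)
  dP r hr := ((h.dP r hr).fun_sub (h'.dP r hr)).congr_deriv (by ring)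

lemma RStep.zero (n : ℕ) : RStep n (fun _ => 0) (fun _ => 0) (fun _ => 0) where
  cW := continuousOn_const
  cP := continuousOn_const
  P0 := rfl
  dW r hr := by simpa using hasDerivAt_const r (0 : ℝ)
  dP r hr := by simpa using hasDerivAt_const r (0 : ℝ)

lemma RStep.sum {n : ℕ} {ι : Type*} (s : Finset ι) {W P g : ι → ℝ → ℝ}
    (h : ∀ i ∈ s, RStep n (W i) (P i) (g i)) :
    RStep n (fun r => ∑ i ∈ s, W i r) (fun r => ∑ i ∈ s, P i r) (fun r => ∑ i ∈ s, g i r) where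
  cW := continuousOn_finsetSum s fun i hi => (h i hi).cW
  cP := continuousOn_finsetSum s fun i hi => (h i hi).cP
  P0 := Finset.sum_eq_zero fun i hi => (h i hi).P0
  dW r hr := by
    rw [Finset.sum_div, ← Finset.sum_neg_distrib]
    exact HasDerivAt.fun_sum fun i hi => (h i hi).dW r hr
  dP r hr := by
    rw [Finset.mul_sum]
    exact HasDerivAt.fun_sum fun i hi => (h i hi).dP r hr

/-- `Alt g σ N`: along some `0 < x₀ < ⋯ < x_N` the values of `g` alternate in sign, starting with
the sign of `σ`. -/
def Alt (g : ℝ → ℝ) (σ : ℝ) (N : ℕ) : Prop :=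
  ∃ x : ℕ → ℝ, 0 < x 0 ∧ (∀ i < N, x i < x (i + 1)) ∧ ∀ i ≤ N, 0 < σ * (-1) ^ i * g (x i)

lemma pos_of_chain {x : ℕ → ℝ} {N : ℕ} (h0 : 0 < x 0) (h : ∀ i < N, x i < x (i + 1)) :
    ∀ i ≤ N, 0 < x i := by
  intro i
  induction i with
  | zero => intro _; exact h0
  | succ i ih => intro hi; exact (ih (by omega)).trans (h i (by omega))

lemma mvt_sign {W W' : ℝ → ℝ} {a b s : ℝ} (hab : a < b) (hc : ContinuousOn W (Set.Icc a b))
    (hd : ∀ r ∈ Set.Ioo a b, HasDerivAt W (W' r) r) (hs : 0 < s * (W b - W a)) :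
    ∃ c ∈ Set.Ioo a b, 0 < s * W' c := by
  obtain ⟨c, hc, h⟩ := exists_hasDerivAt_eq_slope W W' hab hc hd
  refine ⟨c, hc, ?_⟩
  rw [h, ← mul_div_assoc]
  exact div_pos hs (sub_pos.2 hab)

/-- If `W` decays at infinity, sign changes of `W` are inherited by `-W'`: one lies between any
two of them, and one more lies beyond the last. -/
lemma Alt.right {W W' : ℝ → ℝ} {σ : ℝ} {N : ℕ} (h : Alt W σ N)
    (hd : ∀ r > 0, HasDerivAt W (W' r) r) (h0 : Tendsto W atTop (𝓝 0)) :
    Alt (fun r => -W' r) σ N := by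
  obtain ⟨x, hx0, hx, hs⟩ := h
  have hpos := pos_of_chain hx0 hx
  have hcont : ∀ a b, 0 < a → ContinuousOn W (Set.Icc a b) := fun a b ha r hr =>
    (hd r (ha.trans_le hr.1)).continuousAt.continuousWithinAt
  have key : ∀ i, ∃ y, (i ≤ N → x i < y) ∧ (i < N → y < x (i + 1)) ∧
      (i ≤ N → 0 < σ * (-1) ^ i * (-W' y)) := by
    intro i
    rcases lt_trichotomy i N with hi | hi | hi
    · obtain ⟨c, hc, h⟩ := mvt_sign (s := -(σ * (-1) ^ i)) (hx i hi)
        (hcont _ _ (hpos i hi.le)) (fun r hr => hd r ((hpos i hi.le).trans hr.1)) (by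
          have h1 := hs i hi.le
          have h2 := hs (i + 1) hi
          rw [pow_succ] at h2
          nlinarith)
      exact ⟨c, fun _ => hc.1, fun _ => hc.2, fun _ => by linarith⟩
    · subst hi
      have h1 := hs i le_rfl
      have h2 : Tendsto (fun r => σ * (-1) ^ i * W r) atTop (𝓝 0) := by
        simpa using h0.const_mul (σ * (-1) ^ i)
      obtain ⟨z, hz1, hz2⟩ := ((h2.eventually (gt_mem_nhds h1)).and (eventually_gt_atTop (x i))).exists
      obtain ⟨c, hc, h⟩ := mvt_sign (s := -(σ * (-1) ^ i)) hz2
        (hcont _ _ (hpos i le_rfl)) (fun r hr => hd r ((hpos i le_rfl).trans hr.1)) (by nlinarith)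
      exact ⟨c, fun _ => hc.1, fun h => absurd h (lt_irrefl _), fun _ => by linarith⟩
    · exact ⟨0, fun h => by omega, fun h => by omega, fun h => by omega⟩
  choose y hy1 hy2 hy3 using key
  exact ⟨y, hx0.trans (hy1 0 (Nat.zero_le _)),
    fun i hi => (hy2 i hi).trans (hy1 (i + 1) hi), hy3⟩

/-- If `W` vanishes at the origin, sign changes of `W` are inherited by `W'`. -/
lemma Alt.left {W W' : ℝ → ℝ} {σ : ℝ} {N : ℕ} (h : Alt W σ N)
    (hd : ∀ r > 0, HasDerivAt W (W' r) r) (hc : ContinuousOn W (Set.Ici 0)) (h0 : W 0 = 0) :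
    Alt W' σ N := by
  obtain ⟨x, hx0, hx, hs⟩ := h
  have hpos := pos_of_chain hx0 hx
  have hcont : ∀ a b, 0 ≤ a → ContinuousOn W (Set.Icc a b) := fun a b ha =>
    hc.mono fun r hr => ha.trans hr.1
  have key : ∀ i, ∃ y, (i ≤ N → y < x i) ∧ (0 < y) ∧ (∀ j, j + 1 = i → i ≤ N → x j < y) ∧
      (i ≤ N → 0 < σ * (-1) ^ i * W' y) := by
    intro i
    by_cases hi : i ≤ N
    · rcases i with _ | i
      · obtain ⟨c, hc, h⟩ := mvt_sign (s := σ * (-1) ^ 0) hx0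
          (hcont _ _ le_rfl) (fun r hr => hd r hr.1) (by
            have h1 := hs 0 hi
            rwa [h0, sub_zero])
        exact ⟨c, fun _ => hc.2, hc.1, fun j hj => by omega, fun _ => h⟩
      · obtain ⟨c, hc, h⟩ := mvt_sign (s := σ * (-1) ^ (i + 1)) (hx i hi)
          (hcont _ _ (hpos i (by omega)).le) (fun r hr => hd r ((hpos i (by omega)).trans hr.1)) (by
            have h1 := hs i (by omega)
            have h2 := hs (i + 1) hi
            rw [pow_succ] at h2 ⊢
            nlinarith)
        refine ⟨c, fun _ => hc.2, (hpos i (by omega)).trans hc.1, fun j hj _ => ?_, fun _ => h⟩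
        obtain rfl : j = i := by omega
        exact hc.1
    · exact ⟨1, fun h => absurd h hi, one_pos, fun j hj h => absurd h hi, fun h => absurd h hi⟩
  choose y hy1 hy2 hy3 hy4 using key
  exact ⟨y, hy2 0, fun i hi => (hy1 i hi.le).trans (hy3 (i + 1) i rfl hi), hy4⟩

/-- A function that vanishes both at the origin and at infinity has a derivative with one more
sign change than itself. -/
lemma Alt.left_right {W W' : ℝ → ℝ} {σ : ℝ} {N : ℕ} (h : Alt W σ N)
    (hd : ∀ r > 0, HasDerivAt W (W' r) r) (hc : ContinuousOn W (Set.Ici 0)) (h0 : W 0 = 0)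
    (hi : Tendsto W atTop (𝓝 0)) :
    Alt W' σ (N + 1) := by
  obtain ⟨x, hx0, hx, hs⟩ := h
  obtain ⟨c, hc, hcs⟩ := mvt_sign (s := σ) hx0
          (hc.mono fun r hr => hr.1) (fun r hr => hd r hr.1) (by
            have h1 := hs 0 (Nat.zero_le _)
            rw [h0, sub_zero]; linarith)
  have h2 : Alt (fun r => W (r + c)) σ N := by
    refine ⟨fun i => x i - c, by simpa using hc.2, fun i hi => by simpa using hx i hi, ?_⟩
    simpa using hs
  have h3 := h2.right (W' := fun r => W' (r + c))
    (fun r hr => HasDerivAt.comp_add_const r c (hd (r + c) (add_pos hr hc.1)))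
    (hi.comp (tendsto_atTop_add_const_right _ _ tendsto_id))
  obtain ⟨y, hy0, hy, hys⟩ := h3
  refine ⟨fun i => Nat.casesOn i c (fun j => y j + c), hc.1, ?_, ?_⟩
  · rintro (_ | i) hi
    · simpa using hy0
    · simpa using hy i (by omega)
  · rintro (_ | i) hi
    · simpa using hcs
    · have := hys i (by omega)
      simp only [pow_succ]
      linarith

lemma Alt.congr_sign {g h : ℝ → ℝ} {σ τ : ℝ} {N : ℕ} (H : Alt g σ N)
    (hgh : ∀ r > 0, ∀ s, 0 < σ * s * g r → 0 < τ * s * h r) : Alt h τ N := by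
  obtain ⟨x, hx0, hx, hs⟩ := H
  exact ⟨x, hx0, hx, fun i hi => hgh _ (pos_of_chain hx0 hx i hi) _ (hs i hi)⟩

/-- Two alternations of equal length with opposite initial signs combine to a longer one:
prepend to the one that starts later the first point of the other. -/
lemma Alt.merge {g : ℝ → ℝ} {σ : ℝ} {N : ℕ} (h : Alt g σ N) (h' : Alt g (-σ) N) :
    Alt g σ (N + 1) ∨ Alt g (-σ) (N + 1) := by
  obtain ⟨x, hx0, hx, hs⟩ := h
  obtain ⟨y, hy0, hy, hys⟩ := h'
  rcases lt_trichotomy (x 0) (y 0) with h | h | h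
  · left
    refine ⟨fun i => Nat.casesOn i (x 0) y, hx0, ?_, ?_⟩
    · rintro (_ | i) hi
      · simpa using h
      · simpa using hy i (by omega)
    · rintro (_ | i) hi
      · simpa using hs 0 (by omega)
      · have := hys i (by omega)
        simp only [pow_succ]
        linarith
  · have h1 := hs 0 (by omega)
    have h2 := hys 0 (by omega)
    rw [h] at h1
    linarith
  · right
    refine ⟨fun i => Nat.casesOn i (y 0) x, hy0, ?_, ?_⟩
    · rintro (_ | i) hi
      · simpa using h
      · simpa using hx i (by omega)
    · rintro (_ | i) hi
      · simpa using hys 0 (by omega)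
      · have := hs i (by omega)
        simp only [pow_succ]
        linarith

/-- Inverting `-Δ` on decaying radial functions is variation diminishing. -/
lemma RStep.alt {n : ℕ} {W P g : ℝ → ℝ} (h : RStep n W P g) (h0 : Tendsto W atTop (𝓝 0))
    {σ : ℝ} {N : ℕ} (hA : Alt W σ N) : Alt g σ N := by
  have h1 : Alt P σ N := (hA.right h.dW h0).congr_sign fun r hr s hs => by
    rw [neg_neg, mul_div_assoc'] at hs
    exact (div_pos_iff_of_pos_right (by positivity)).1 hs
  refine (h1.left h.dP h.cP h.P0).congr_sign fun r hr s hs => ?_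
  have : 0 < r ^ (n - 1) * (σ * s * g r) := by linarith
  exact (pos_iff_pos_of_mul_pos this).1 (by positivity)

/-- If moreover `W 0 = 0`, then a sign change is gained. -/
lemma RStep.alt_gain {n : ℕ} {W P g : ℝ → ℝ} (h : RStep n W P g) (h0 : Tendsto W atTop (𝓝 0))
    (hW : W 0 = 0) {σ : ℝ} {N : ℕ} (hA : Alt W σ N) : Alt g (-σ) (N + 1) := by
  have h1 : Alt P (-σ) (N + 1) :=
    (hA.left_right h.dW h.cW hW h0).congr_sign fun r hr s hs => by
      have : 0 < (-σ * s * P r) / r ^ (n - 1) := by convert hs using 1; ring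
      exact (div_pos_iff_of_pos_right (by positivity)).1 this
  refine (h1.left h.dP h.cP h.P0).congr_sign fun r hr s hs => ?_
  have : 0 < r ^ (n - 1) * (-σ * s * g r) := by linarith
  exact (pos_iff_pos_of_mul_pos this).1 (by positivity)

/-- Arbitrarily long alternations force infinitely many zeros. -/
lemma infinite_zeros_of_alt {g : ℝ → ℝ} (hc : ContinuousOn g (Set.Ioi 0))
    (h : ∀ N, ∃ σ, Alt g σ N) : {r : ℝ | 0 < r ∧ g r = 0}.Infinite := by
  intro hfin
  obtain ⟨σ, x, hx0, hx, hs⟩ := h (hfin.toFinset.card + 1)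
  set N := hfin.toFinset.card + 1 with hN
  have hpos := pos_of_chain hx0 hx
  have key : ∀ i, ∃ z, i < N → x i < z ∧ z < x (i + 1) ∧ g z = 0 := by
    intro i
    by_cases hi : i < N
    · have h1 := hs i hi.le
      have h2 := hs (i + 1) hi
      have hcc : ContinuousOn (fun r => -(σ * (-1) ^ i) * g r) (Set.Icc (x i) (x (i + 1))) :=
        (hc.mono fun r hr => (hpos i hi.le).trans_le hr.1).const_mul _
      obtain ⟨z, hz, hz0⟩ := intermediate_value_Ioo (hx i hi).le hcc
        (show (0 : ℝ) ∈ _ by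
          rw [pow_succ] at h2
          constructor <;> linarith)
      refine ⟨z, fun _ => ⟨hz.1, hz.2, ?_⟩⟩
      rcases mul_eq_zero.1 hz0 with h | h
      · rw [neg_eq_zero.1 h] at h1; simp at h1
      · exact h
    · exact ⟨0, fun h => absurd h hi⟩
  choose z hz using key
  have hmono : ∀ i j, i < j → j < N → z i < z j := by
    intro i j hij
    induction j with
    | zero => omega
    | succ j ih =>
      intro hj
      have h1 : z j < z (j + 1) := (hz j (by omega)).2.1.trans (hz (j + 1) hj).1
      rcases Nat.lt_succ_iff_lt_or_eq.1 hij with h | h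
      · exact (ih h (by omega)).trans h1
      · rw [h]; exact h1
  have := Finset.card_le_card_of_injOn (s := Finset.range N) (t := hfin.toFinset) z
    (fun i hi => by
      have hi := Finset.mem_range.1 (Finset.mem_coe.1 hi)
      simpa using ⟨(hpos i hi.le).trans (hz i hi).1, (hz i hi).2.2⟩)
    (fun i hi j hj hij => by
      have hi := Finset.mem_range.1 (Finset.mem_coe.1 hi)
      have hj := Finset.mem_range.1 (Finset.mem_coe.1 hj)
      by_contra hne
      rcases lt_or_gt_of_ne hne with h | h
      · exact (hmono i j h hj).ne hij
      · exact (hmono j i h hi).ne hij.symm)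
  rw [Finset.card_range] at this
  omega

/-! ### Chains of radial Poisson equations and their decay -/

/-- A chain of `k` radial Poisson equations: `φ (i + 1) = -Δ (φ i)` for `i < k`, with fluxes `P i`. -/
def Chain (n k : ℕ) (φ P : ℕ → ℝ → ℝ) : Prop := ∀ i < k, RStep n (φ i) (P i) (φ (i + 1))

lemma le_of_deriv_nonneg {F F' : ℝ → ℝ} {a b : ℝ} (hab : a ≤ b)
    (hc : ContinuousOn F (Set.Icc a b)) (hd : ∀ r ∈ Set.Ioo a b, HasDerivAt F (F' r) r)
    (hn : ∀ r ∈ Set.Ioo a b, 0 ≤ F' r) : F a ≤ F b := by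
  rcases hab.eq_or_lt with rfl | hab
  · rfl
  obtain ⟨c, hc, h⟩ := exists_hasDerivAt_eq_slope F F' hab hc hd
  have := hn c hc
  rw [h] at this
  rw [le_div_iff₀ (sub_pos.2 hab)] at this
  linarith

lemma abs_sub_le_of_deriv {F F' B B' : ℝ → ℝ} {a b : ℝ} (hab : a ≤ b)
    (hc : ContinuousOn F (Set.Icc a b)) (hd : ∀ r ∈ Set.Ioo a b, HasDerivAt F (F' r) r)
    (hcB : ContinuousOn B (Set.Icc a b)) (hdB : ∀ r ∈ Set.Ioo a b, HasDerivAt B (B' r) r)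
    (hn : ∀ r ∈ Set.Ioo a b, |F' r| ≤ B' r) : |F b - F a| ≤ B b - B a := by
  have h1 := le_of_deriv_nonneg hab (hcB.sub hc) (fun r hr => (hdB r hr).sub (hd r hr))
    (fun r hr => by linarith [(abs_le.1 (hn r hr)).2])
  have h2 := le_of_deriv_nonneg hab (hcB.add hc) (fun r hr => (hdB r hr).add (hd r hr))
    (fun r hr => by linarith [(abs_le.1 (hn r hr)).1])
  simp only [Pi.sub_apply, Pi.add_apply] at h1 h2
  rw [abs_le]; constructor <;> linarith

/-- If `-ΔW` is eventually bounded below by a positive constant, then `W` becomes negative, with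
a bound that can be fed into the next equation of a chain. -/
lemma RStep.le_neg_one {n : ℕ} {W P g : ℝ → ℝ} (hn : 2 ≤ n) (h : RStep n W P g) {d R : ℝ}
    (hd : 0 < d) (hg : ∀ s ≥ R, d ≤ g s) : ∃ R', ∀ s ≥ R', W s ≤ -1 := by
  set R1 := max R 1 with hR1
  have hR : R ≤ R1 := le_max_left _ _
  have h1 : 1 ≤ R1 := le_max_right _ _
  have hn0 : (n : ℝ) ≠ 0 := by positivity
  set C := P R1 - d * R1 ^ n / n with hC
  have hP : ∀ s ≥ R1, C + d * s ^ n / n ≤ P s := by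
    intro s hs
    have hdd : ∀ r : ℝ, HasDerivAt (fun s : ℝ => d * s ^ n / n) (d * r ^ (n - 1)) r := by
      intro r
      refine (((hasDerivAt_pow n r).const_mul d).div_const (n : ℝ)).congr_deriv ?_
      field_simp
    have := le_of_deriv_nonneg (F := fun s => P s - d * s ^ n / n) hs
      (ContinuousOn.sub (h.cP.mono fun r hr => (by linarith [hr.1] : (0 : ℝ) ≤ r))
        fun r _ => (hdd r).continuousAt.continuousWithinAt)
      (fun r hr => (h.dP r (by linarith [hr.1])).fun_sub (hdd r))
      (fun r hr => by
        have h2 := hg r (by linarith [hr.1])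
        have h3 : 0 < r ^ (n - 1) := pow_pos (by linarith [hr.1]) _
        nlinarith)
    linarith
  set R2 := max R1 ((1 + |C|) * n / d) with hR2
  have hW' : ∀ s ≥ R2, 1 ≤ P s / s ^ (n - 1) := by
    intro s hs
    have hs1 : R1 ≤ s := (le_max_left _ _).trans hs
    have hs2 : (1 + |C|) * n / d ≤ s := (le_max_right _ _).trans hs
    have hs3 : 1 ≤ s := h1.trans hs1
    have h4 : 1 ≤ s ^ (n - 1) := one_le_pow₀ hs3
    rw [le_div_iff₀ (by linarith), one_mul]
    refine le_trans ?_ (hP s hs1)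
    have h5 : 1 + |C| ≤ d * s / n := by
      rw [div_le_iff₀ hd] at hs2
      rw [le_div_iff₀ (by positivity)]
      linarith
    have h6 : d * s ^ n / n = (d * s / n) * s ^ (n - 1) := by
      obtain ⟨m, rfl⟩ : ∃ m, n = m + 1 := ⟨n - 1, by omega⟩
      simp only [Nat.add_sub_cancel, pow_succ]
      ring
    have h7 : (1 + |C|) * s ^ (n - 1) ≤ (d * s / n) * s ^ (n - 1) :=
      mul_le_mul_of_nonneg_right h5 (by linarith)
    have h8 : |C| ≤ |C| * s ^ (n - 1) := le_mul_of_one_le_right (abs_nonneg _) h4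
    rw [h6]
    linarith [neg_abs_le C]
  refine ⟨max R2 (R2 + W R2 + 1), fun s hs => ?_⟩
  have hs1 : R2 ≤ s := (le_max_left _ _).trans hs
  have hs2 : R2 + W R2 + 1 ≤ s := (le_max_right _ _).trans hs
  have hR2p : 1 ≤ R2 := h1.trans (le_max_left _ _)
  have := le_of_deriv_nonneg (F := fun s => -W s - s) hs1
    (ContinuousOn.sub (h.cW.mono fun r hr => (by linarith [hr.1] : (0 : ℝ) ≤ r)).neg
      continuousOn_id)
    (fun r hr => ((h.dW r (by linarith [hr.1])).fun_neg).fun_sub (hasDerivAt_id r))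
    (fun r hr => by linarith [hW' r hr.1.le])
  linarith

lemma Chain.neg {n k : ℕ} {φ P : ℕ → ℝ → ℝ} (h : Chain n k φ P) :
    Chain n k (fun i r => -φ i r) (fun i r => -P i r) := fun i hi => (h i hi).neg

/-- If the first function of a chain tends to zero, no function of the chain is eventually bounded
away from zero: otherwise the ones before it would be as well. -/
lemma Chain.not_pos {n k : ℕ} (hn : 2 ≤ n) {φ P : ℕ → ℝ → ℝ} (h : Chain n k φ P)
    (h0 : Tendsto (φ 0) atTop (𝓝 0)) {i : ℕ} (hi : i ≤ k) {d R : ℝ} (hd : 0 < d)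
    (hg : ∀ s ≥ R, d ≤ φ i s) : False := by
  induction i generalizing φ P d R with
  | zero =>
    obtain ⟨s, h1, h2⟩ := ((h0.eventually (gt_mem_nhds hd)).and (eventually_ge_atTop R)).exists
    exact absurd (hg s h2) (not_le.2 h1)
  | succ i ih =>
    obtain ⟨R', hR'⟩ := (h i (by omega)).le_neg_one hn hd hg
    exact ih h.neg (by simpa using h0.neg) (by omega) one_pos
      (fun s hs => by linarith [hR' s hs])

lemma hasDerivAt_rpow_const_mul (A e : ℝ) {r : ℝ} (hr : 0 < r) (he : e ≠ 0) :
    HasDerivAt (fun s : ℝ => A / e * s ^ e) (A * r ^ (e - 1)) r := by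
  refine ((Real.hasDerivAt_rpow_const (Or.inl hr.ne')).const_mul (A / e)).congr_deriv ?_
  field_simp

lemma pow_pred_eq_rpow {n : ℕ} (hn : 1 ≤ n) (r : ℝ) : r ^ (n - 1) = r ^ ((n : ℝ) - 1) := by
  rw [← Real.rpow_natCast, Nat.cast_sub hn, Nat.cast_one]

/-- Decay of solutions of `-ΔW = g`: if `g = O(A r^{-b} + B r^{-b'})` with `2 < b, b' < n`, then
`W` gains two powers of `r`, provided that it does not tend to a nonzero limit. -/
lemma RStep.decay {n : ℕ} (hn : 2 ≤ n) {W P g : ℝ → ℝ} (h : RStep n W P g) {A B b b' κ : ℝ}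
    (hA : 0 ≤ A) (hB : 0 ≤ B) (hb : 2 < b) (hbn : b < n) (hb' : 2 < b') (hbn' : b' < n)
    (hκ0 : 0 < κ) (hκ : κ ≤ (n - b) * (b - 2)) (hκ' : κ ≤ (n - b') * (b' - 2))
    (hg : ∀ r > 0, |g r| ≤ A * r ^ (-b) + B * r ^ (-b'))
    (hpos : ∀ d > 0, ∀ R, ¬ ∀ s ≥ R, d ≤ W s) (hneg : ∀ d > 0, ∀ R, ¬ ∀ s ≥ R, d ≤ -W s) :
    ∀ r > 0, |W r| ≤ κ⁻¹ * (A * r ^ (2 - b) + B * r ^ (2 - b')) := by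
  have hP : ∀ r > 0, |P r| ≤ A / (n - b) * r ^ ((n : ℝ) - b) + B / (n - b') * r ^ ((n : ℝ) - b') := by
    intro r hr
    have hcont : ∀ e : ℝ, 0 < e → ∀ A : ℝ, ContinuousOn (fun s : ℝ => A / e * s ^ e) (Set.Icc 0 r) :=
      fun e he A => (Real.continuous_rpow_const he.le).continuousOn.const_mul _
    have := abs_sub_le_of_deriv (F := P)
      (B := fun s => A / (n - b) * s ^ ((n : ℝ) - b) + B / (n - b') * s ^ ((n : ℝ) - b')) hr.le
      (h.cP.mono fun s hs => hs.1) (fun s hs => h.dP s hs.1)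
      ((hcont _ (by linarith) A).add (hcont _ (by linarith) B))
      (fun s hs => (hasDerivAt_rpow_const_mul A _ hs.1 (by linarith)).add
        (hasDerivAt_rpow_const_mul B _ hs.1 (by linarith)))
      (fun s hs => by
        have hs0 : 0 < s := hs.1
        have h1 := hg s hs.1
        have h2 : 0 < s ^ (n - 1) := pow_pos hs0 _
        rw [abs_mul, abs_of_pos h2]
        refine (mul_le_mul_of_nonneg_left h1 h2.le).trans_eq ?_
        rw [pow_pred_eq_rpow (by omega), mul_add, mul_left_comm, mul_left_comm _ B,
          ← Real.rpow_add hs0, ← Real.rpow_add hs0]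
        congr 3 <;> ring)
    simpa [h.P0, Real.zero_rpow (by linarith : (n : ℝ) - b ≠ 0),
      Real.zero_rpow (by linarith : (n : ℝ) - b' ≠ 0)] using this
  set H : ℝ → ℝ := fun s => (A / (n - b)) / (2 - b) * s ^ (2 - b) +
    (B / (n - b')) / (2 - b') * s ^ (2 - b') with hH
  have hHneg : ∀ s > 0, H s ≤ 0 := by
    intro s hs
    have h1 : (A / (n - b)) / (2 - b) ≤ 0 :=
      div_nonpos_of_nonneg_of_nonpos (div_nonneg hA (by linarith)) (by linarith)
    have h2 : (B / (n - b')) / (2 - b') ≤ 0 :=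
      div_nonpos_of_nonneg_of_nonpos (div_nonneg hB (by linarith)) (by linarith)
    exact add_nonpos (mul_nonpos_of_nonpos_of_nonneg h1 (by positivity))
      (mul_nonpos_of_nonpos_of_nonneg h2 (by positivity))
  have hHd : ∀ s > 0, HasDerivAt H (A / (n - b) * s ^ (2 - b - 1) + B / (n - b') * s ^ (2 - b' - 1)) s :=
    fun s hs => (hasDerivAt_rpow_const_mul _ _ hs (by linarith)).add
      (hasDerivAt_rpow_const_mul _ _ hs (by linarith))
  intro r hr
  have hW : ∀ s ≥ r, |W s - W r| ≤ -H r := by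
    intro s hs
    have := abs_sub_le_of_deriv (F := W) (B := H) hs
      (h.cW.mono fun t ht => hr.le.trans ht.1) (fun t ht => h.dW t (hr.trans ht.1))
      (fun t ht => (hHd t (hr.trans_le ht.1)).continuousAt.continuousWithinAt)
      (fun t ht => hHd t (hr.trans ht.1))
      (fun t ht => by
        have ht0 : 0 < t := hr.trans ht.1
        have h2 : 0 < t ^ (n - 1) := pow_pos ht0 _
        rw [abs_neg, abs_div, abs_of_pos h2, div_le_iff₀ h2]
        refine (hP t ht0).trans_eq ?_
        rw [pow_pred_eq_rpow (by omega), add_mul, mul_assoc, mul_assoc,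
          ← Real.rpow_add ht0, ← Real.rpow_add ht0]
        congr 3 <;> ring)
    linarith [hHneg s (hr.trans_le hs)]
  have hWr : |W r| ≤ -H r := by
    by_contra hcon
    push Not at hcon
    rcases lt_abs.1 hcon with hc | hc
    · exact hpos (W r + H r) (by linarith) r fun s hs => by linarith [(abs_le.1 (hW s hs)).1]
    · exact hneg (-W r + H r) (by linarith) r fun s hs => by linarith [(abs_le.1 (hW s hs)).2]
  refine hWr.trans ?_
  have e1 : -(A / (n - b) / (2 - b)) = A * ((n - b) * (b - 2))⁻¹ := by
    rw [div_div, ← div_eq_mul_inv, ← div_neg]; congr 1; ring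
  have e2 : -(B / (n - b') / (2 - b')) = B * ((n - b') * (b' - 2))⁻¹ := by
    rw [div_div, ← div_eq_mul_inv, ← div_neg]; congr 1; ring
  have i1 : ((n - b) * (b - 2))⁻¹ ≤ κ⁻¹ := inv_anti₀ hκ0 hκ
  have i2 : ((n - b') * (b' - 2))⁻¹ ≤ κ⁻¹ := inv_anti₀ hκ0 hκ'
  calc -H r = A * ((n - b) * (b - 2))⁻¹ * r ^ (2 - b) + B * ((n - b') * (b' - 2))⁻¹ * r ^ (2 - b') := by
        rw [← e1, ← e2, hH]; ring
    _ ≤ A * κ⁻¹ * r ^ (2 - b) + B * κ⁻¹ * r ^ (2 - b') := by gcongr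
    _ = _ := by ring

/-- `RStep.decay` iterated along a chain. -/
lemma Chain.decay {n k : ℕ} (hn : 2 ≤ n) {φ P : ℕ → ℝ → ℝ} (h : Chain n k φ P)
    (h0 : Tendsto (φ 0) atTop (𝓝 0)) {A B b b' : ℝ} (hA : 0 ≤ A) (hB : 0 ≤ B) (hbb : b ≤ b')
    (hb : 2 * k < b) (hbn : b' < n)
    (hg : ∀ r > 0, |φ k r| ≤ A * r ^ (-b) + B * r ^ (-b')) :
    ∀ j ≤ k, ∀ r > 0, |φ (k - j) r| ≤
      (((n - b') * (b - 2 * k))⁻¹) ^ j * (A * r ^ (2 * j - b) + B * r ^ (2 * j - b')) := by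
  intro j
  have hκ0 : 0 < (n - b') * (b - 2 * k) := mul_pos (by linarith) (by linarith)
  induction j with
  | zero => intro _ r hr; simpa using hg r hr
  | succ j ih =>
    intro hj
    have hjk : (j : ℝ) + 1 ≤ k := by exact_mod_cast hj
    have hstep := h (k - (j + 1)) (by omega)
    rw [show k - (j + 1) + 1 = k - j by omega] at hstep
    have hj0 : (0 : ℝ) ≤ j := Nat.cast_nonneg j
    have := hstep.decay hn (A := (((n - b') * (b - 2 * k))⁻¹) ^ j * A)
      (B := (((n - b') * (b - 2 * k))⁻¹) ^ j * B) (b := b - 2 * j) (b' := b' - 2 * j)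
      (κ := (n - b') * (b - 2 * k)) (by positivity) (by positivity) (by linarith) (by linarith)
      (by linarith) (by linarith) hκ0
      (mul_le_mul (by linarith) (by linarith) (by linarith) (by linarith))
      (mul_le_mul (by linarith) (by linarith) (by linarith) (by linarith))
      (fun r hr => by
        refine (ih (by omega) r hr).trans_eq ?_
        rw [neg_sub, neg_sub]; ring)
      (fun d hd R hR => h.not_pos hn h0 (by omega) hd hR)
      (fun d hd R hR => h.neg.not_pos hn (by simpa using h0.neg) (i := k - (j + 1)) (by omega) hd hR)
    intro r hr
    refine (this r hr).trans_eq ?_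
    rw [pow_succ]
    push_cast
    rw [show 2 - (b - 2 * (j : ℝ)) = 2 * (j + 1) - b by ring,
      show 2 - (b' - 2 * (j : ℝ)) = 2 * (j + 1) - b' by ring]
    ring

/-! ### The radial problem and its decay at infinity -/

/-- A radial solution of `(-Δ)^k φ = (-1)^k |φ|^q φ` in dimension `n = 2 k + 2 α`, `q = 2 k / α`,
written as a chain, with `φ = o(r ^ (-α))` at infinity. -/
structure Sol (n k : ℕ) (α : ℝ) (φ P : ℕ → ℝ → ℝ) : Prop where
  chain : Chain n k φ P
  eq : ∀ r > 0, φ k r = (-1) ^ k * (|φ 0 r| ^ (2 * k / α) * φ 0 r)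
  dec : Tendsto (fun r : ℝ => r ^ α * φ 0 r) atTop (𝓝 0)

lemma Sol.abs_eq {n k : ℕ} {α : ℝ} {φ P : ℕ → ℝ → ℝ} (h : Sol n k α φ P) {r : ℝ} (hr : 0 < r) :
    |φ k r| = |φ 0 r| ^ (2 * k / α) * |φ 0 r| := by
  rw [h.eq r hr, abs_mul, abs_mul, abs_pow, abs_neg, abs_one, one_pow, one_mul,
    abs_of_nonneg (Real.rpow_nonneg (abs_nonneg _) _)]

lemma Sol.tendsto_zero {n k : ℕ} {α : ℝ} (hα : 0 < α) {φ P : ℕ → ℝ → ℝ} (h : Sol n k α φ P) :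
    Tendsto (φ 0) atTop (𝓝 0) := by
  have := h.dec.mul (tendsto_rpow_neg_atTop hα)
  rw [zero_mul] at this
  refine this.congr' ?_
  filter_upwards [eventually_gt_atTop 0] with r hr
  rw [mul_right_comm, ← Real.rpow_add hr, add_neg_cancel, Real.rpow_zero, one_mul]

lemma Sol.bound {n k : ℕ} {α : ℝ} (hk : 1 ≤ k) (hα : 0 < α) {φ P : ℕ → ℝ → ℝ}
    (h : Sol n k α φ P) : ∃ M, 0 ≤ M ∧ ∀ r > 0, |φ 0 r| ≤ M * r ^ (-α) := by
  have hc : ContinuousOn (fun r : ℝ => r ^ α * φ 0 r) (Set.Ici 0) :=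
    (Real.continuous_rpow_const hα.le).continuousOn.mul (h.chain 0 hk).cW
  have hev : ∀ᶠ r in atTop, |r ^ α * φ 0 r| < 1 := by
    have := h.dec.abs
    rw [abs_zero] at this
    exact this.eventually (gt_mem_nhds one_pos)
  obtain ⟨R, hR⟩ := eventually_atTop.1 hev
  obtain ⟨C, hC⟩ := isCompact_Icc.exists_bound_of_continuousOn
    (hc.mono (fun r (hr : r ∈ Set.Icc 0 (max R 0)) => hr.1))
  refine ⟨max C 1, by positivity, fun r hr => ?_⟩
  have h1 : |r ^ α * φ 0 r| ≤ max C 1 := by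
    by_cases hrR : r ≤ R
    · exact (hC r ⟨hr.le, hrR.trans (le_max_left _ _)⟩).trans (le_max_left _ _)
    · exact (hR r (not_le.1 hrR).le).le.trans (le_max_right _ _)
  have h2 : 0 < r ^ α := Real.rpow_pos_of_pos hr _
  rw [abs_mul, abs_of_pos h2] at h1
  rw [Real.rpow_neg hr.le, ← div_eq_mul_inv, le_div_iff₀ h2]
  linarith

/-- Every function of the chain of a solution tends to zero at infinity. -/
lemma Sol.tendsto {n k : ℕ} {α : ℝ} (hk : 1 ≤ k) (hα : 0 < α) (hn : (n : ℝ) = 2 * k + 2 * α)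
    {φ P : ℕ → ℝ → ℝ} (h : Sol n k α φ P) : ∀ i ≤ k, Tendsto (φ i) atTop (𝓝 0) := by
  obtain ⟨M, hM, hMb⟩ := h.bound hk hα
  have hk' : (1 : ℝ) ≤ k := by exact_mod_cast hk
  have hn2 : 2 ≤ n := by
    have : (2 : ℝ) ≤ n := by linarith
    exact_mod_cast this
  have hdec := h.chain.decay hn2 (h.tendsto_zero hα) (A := M ^ (2 * k / α) * M) (B := 0)
    (b := 2 * k + α) (b' := 2 * k + α) (by positivity) le_rfl le_rfl (by linarith) (by linarith)
    (fun r hr => by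
      rw [h.abs_eq hr]
      calc |φ 0 r| ^ (2 * k / α) * |φ 0 r|
          ≤ (M * r ^ (-α)) ^ (2 * k / α) * (M * r ^ (-α)) := by
            gcongr <;> exact hMb r hr
        _ = _ := by
            rw [Real.mul_rpow hM (by positivity), ← Real.rpow_mul hr.le,
              show -α * (2 * k / α) = -(2 * k) by field_simp,
              neg_add, Real.rpow_add hr]
            ring)
  intro i hi
  refine squeeze_zero_norm' (a := fun r : ℝ => ((((n : ℝ) - (2 * k + α)) * (2 * k + α - 2 * k))⁻¹)
    ^ (k - i) * (M ^ (2 * k / α) * M * r ^ (-(2 * k + α - 2 * (k - i : ℕ))))) ?_ ?_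
  · filter_upwards [eventually_gt_atTop 0] with r hr
    have := hdec (k - i) (by omega) r hr
    rw [show k - (k - i) = i by omega] at this
    refine this.trans_eq ?_
    rw [neg_sub]
    ring
  · have hki : ((k - i : ℕ) : ℝ) ≤ k := by exact_mod_cast Nat.sub_le k i
    have := ((tendsto_rpow_neg_atTop (y := 2 * k + α - 2 * (k - i : ℕ)) (by linarith)).const_mul
      (M ^ (2 * k / α) * M)).const_mul
      (((((n : ℝ) - (2 * k + α)) * (2 * k + α - 2 * k))⁻¹) ^ (k - i))
    simpa using this

/-- Smallness of `r ^ α * φ` at infinity self-improves to a power gain: plugging a bound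
`A r^{-α} + B r^{-α-δ}` into the equation halves `A` at the cost of a fixed increase of `B`. -/
lemma Sol.strong_decay {n k : ℕ} {α : ℝ} (hk : 1 ≤ k) (hα : 0 < α)
    (hn : (n : ℝ) = 2 * k + 2 * α) {φ P : ℕ → ℝ → ℝ} (h : Sol n k α φ P) {δ : ℝ} (hδ : 0 < δ)
    (hδα : δ < α) : ∃ C, 0 ≤ C ∧ ∀ r > 0, |φ 0 r| ≤ C * r ^ (-α - δ) := by
  obtain ⟨M, hM, hMb⟩ := h.bound hk hα
  have hk' : (1 : ℝ) ≤ k := by exact_mod_cast hk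
  have hn2 : 2 ≤ n := by
    have : (2 : ℝ) ≤ n := by linarith
    exact_mod_cast this
  have hq : 0 < 2 * k / α := by positivity
  set K : ℝ := ((α - δ) * α)⁻¹ with hK
  have hK0 : 0 < K := inv_pos.2 (mul_pos (by linarith) hα)
  set ε : ℝ := 1 / (2 * K ^ k) with hε
  have hε0 : 0 < ε := by positivity
  obtain ⟨R, hR1, hR⟩ : ∃ R ≥ (1 : ℝ), ∀ r ≥ R, |φ 0 r| ^ (2 * k / α) ≤ ε * r ^ (-(2 * k : ℝ)) := by
    have := (h.dec.abs).rpow_const (p := 2 * k / α) (Or.inr hq.le)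
    rw [abs_zero, Real.zero_rpow hq.ne'] at this
    obtain ⟨R, hR⟩ := eventually_atTop.1 (this.eventually (gt_mem_nhds hε0))
    refine ⟨max R 1, le_max_right _ _, fun r hr => ?_⟩
    have hr0 : 0 < r := one_pos.trans_le ((le_max_right _ _).trans hr)
    have h1 := hR r ((le_max_left _ _).trans hr)
    rw [abs_mul, abs_of_pos (Real.rpow_pos_of_pos hr0 _),
      Real.mul_rpow (by positivity) (abs_nonneg _), ← Real.rpow_mul hr0.le,
      show α * (2 * k / α) = 2 * k by field_simp] at h1
    rw [Real.rpow_neg hr0.le, ← div_eq_mul_inv, le_div_iff₀ (by positivity)]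
    linarith
  have hR0 : 0 < R := by linarith
  set D : ℝ := K ^ k * (M ^ (2 * k / α) * M * R ^ δ) with hD
  have hD0 : 0 ≤ D := by positivity
  have step : ∀ A B : ℝ, 0 ≤ A → 0 ≤ B → (∀ r > 0, |φ 0 r| ≤ A * r ^ (-α) + B * r ^ (-α - δ)) →
      ∀ r > 0, |φ 0 r| ≤ A / 2 * r ^ (-α) + (B / 2 + D) * r ^ (-α - δ) := by
    intro A B hA hB hAB
    have hdec := h.chain.decay hn2 (h.tendsto_zero hα) (A := ε * A)
      (B := ε * B + M ^ (2 * k / α) * M * R ^ δ)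
      (b := 2 * k + α) (b' := 2 * k + α + δ) (by positivity) (by positivity) (by linarith)
      (by linarith) (by linarith)
      (fun r hr => by
        rw [h.abs_eq hr]
        have hs1 : r ^ (-(2 * k + α : ℝ)) = r ^ (-(2 * k : ℝ)) * r ^ (-α) := by
          rw [← Real.rpow_add hr]; congr 1; ring
        have hs2 : r ^ (-(2 * k + α + δ : ℝ)) = r ^ (-(2 * k : ℝ)) * r ^ (-α - δ) := by
          rw [← Real.rpow_add hr]; congr 1; ring
        have hs3 : r ^ (-α) = r ^ (-α - δ) * r ^ δ := by
          rw [← Real.rpow_add hr]; congr 1; ring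
        rcases le_total R r with hRr | hRr
        · calc |φ 0 r| ^ (2 * k / α) * |φ 0 r|
              ≤ (ε * r ^ (-(2 * k : ℝ))) * (A * r ^ (-α) + B * r ^ (-α - δ)) := by
                gcongr
                · exact hR r hRr
                · exact hAB r hr
            _ = ε * A * r ^ (-(2 * k + α : ℝ)) + ε * B * r ^ (-(2 * k + α + δ : ℝ)) := by
                rw [hs1, hs2]; ring
            _ ≤ _ := by
                gcongr
                have : 0 ≤ M ^ (2 * k / α) * M * R ^ δ := by positivity
                linarith
        · calc |φ 0 r| ^ (2 * k / α) * |φ 0 r|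
              ≤ (M * r ^ (-α)) ^ (2 * k / α) * (M * r ^ (-α)) := by
                gcongr <;> exact hMb r hr
            _ = M ^ (2 * k / α) * M * r ^ δ * r ^ (-(2 * k + α + δ : ℝ)) := by
                rw [Real.mul_rpow hM (by positivity), ← Real.rpow_mul hr.le,
                  show -α * (2 * k / α) = -(2 * k) by field_simp, hs2, hs3]
                ring
            _ ≤ M ^ (2 * k / α) * M * R ^ δ * r ^ (-(2 * k + α + δ : ℝ)) := by gcongr
            _ ≤ _ := by
                have h1 : 0 ≤ ε * A * r ^ (-(2 * k + α : ℝ)) := by positivity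
                have h2 : 0 ≤ ε * B * r ^ (-(2 * k + α + δ : ℝ)) := by positivity
                linarith)
    intro r hr
    have h1 := hdec k le_rfl r hr
    rw [Nat.sub_self, show (n : ℝ) - (2 * k + α + δ) = α - δ by linarith,
      show 2 * (k : ℝ) + α - 2 * k = α by ring, ← hK,
      show 2 * (k : ℝ) - (2 * k + α) = -α by ring,
      show 2 * (k : ℝ) - (2 * k + α + δ) = -α - δ by ring] at h1
    refine h1.trans_eq ?_
    have h2 : K ^ k * ε = 1 / 2 := by rw [hε]; field_simp
    calc K ^ k * (ε * A * r ^ (-α) + (ε * B + M ^ (2 * k / α) * M * R ^ δ) * r ^ (-α - δ))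
        = (K ^ k * ε) * A * r ^ (-α) + ((K ^ k * ε) * B + D) * r ^ (-α - δ) := by rw [hD]; ring
      _ = _ := by rw [h2]; ring
  have iter : ∀ m : ℕ, ∀ r > 0, |φ 0 r| ≤ M * (1 / 2) ^ m * r ^ (-α) + 2 * D * r ^ (-α - δ) := by
    intro m
    induction m with
    | zero =>
      intro r hr
      have h1 := hMb r hr
      have h2 : 0 ≤ 2 * D * r ^ (-α - δ) := by positivity
      simp only [pow_zero, mul_one]
      linarith
    | succ m ih =>
      intro r hr
      refine (step _ _ (by positivity) (by positivity) ih r hr).trans_eq ?_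
      rw [pow_succ]; ring
  refine ⟨2 * D, by positivity, fun r hr => ?_⟩
  have ht : Tendsto (fun m : ℕ => M * (1 / 2 : ℝ) ^ m * r ^ (-α) + 2 * D * r ^ (-α - δ)) atTop
      (𝓝 (M * 0 * r ^ (-α) + 2 * D * r ^ (-α - δ))) :=
    (((tendsto_pow_atTop_nhds_zero_of_lt_one (by norm_num) (by norm_num)).const_mul M).mul_const
      _).add_const _
  rw [mul_zero, zero_mul, zero_add] at ht
  exact ge_of_tendsto' ht fun m => iter m r hr

lemma hasDerivAt_rpow_mul_self {q : ℝ} (hq : 0 < q) (z : ℝ) :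
    HasDerivAt (fun z : ℝ => |z| ^ q * z) ((q + 1) * |z| ^ q) z := by
  have hc : Continuous fun z : ℝ => |z| ^ q := continuous_abs.rpow_const fun _ => Or.inr hq.le
  refine hasDerivAt_of_hasDerivAt_of_ne' (x := 0) (g := fun z => (q + 1) * |z| ^ q)
    (fun y hy => ?_) (hc.mul continuous_id).continuousAt (hc.const_mul _).continuousAt z
  have hy' : 0 < |y| := abs_pos.2 hy
  refine (((hasDerivAt_abs hy).rpow_const (Or.inl hy'.ne')).mul (hasDerivAt_id y)).congr_deriv ?_
  have h1 : ((SignType.sign y : SignType) : ℝ) * y = |y| := sign_mul_self y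
  have h2 : |y| * |y| ^ (q - 1) = |y| ^ q := by
    rw [← Real.rpow_one_add' (abs_nonneg _) (by linarith)]; congr 1; ring
  simp only [id, mul_one]
  linear_combination q * |y| ^ (q - 1) * h1 + q * h2

lemma rpow_mul_self_lip {q : ℝ} (hq : 0 < q) {x y m : ℝ} (hx : |x| ≤ m) (hy : |y| ≤ m) :
    |(|x| ^ q * x) - |y| ^ q * y| ≤ (q + 1) * m ^ q * |x - y| := by
  have := (convex_Icc (-m) m).norm_image_sub_le_of_norm_hasDerivWithin_le
    (f := fun z : ℝ => |z| ^ q * z) (C := (q + 1) * m ^ q)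
    (fun z _ => (hasDerivAt_rpow_mul_self hq z).hasDerivWithinAt)
    (fun z hz => by
      rw [Real.norm_eq_abs, abs_of_nonneg (by positivity)]
      gcongr
      exact abs_le.2 hz) (abs_le.1 hy) (abs_le.1 hx)
  simpa using this

lemma rpow_mul_self_strictMono {q : ℝ} (hq : 0 < q) :
    StrictMono (fun z : ℝ => |z| ^ q * z) := by
  refine strictMono_of_odd_strictMonoOn_nonneg (fun x => by simp) fun x hx y hy hxy => ?_
  simp only [Set.mem_Ici] at hx hy
  have : 0 < y := hx.trans_lt hxy
  simp only [abs_of_nonneg hx, abs_of_nonneg hy]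
  exact mul_lt_mul'' (Real.rpow_lt_rpow hx hxy hq) hxy (by positivity) hx

/-! ### Unique continuation from infinitely many zeros -/

/-- Rolle's theorem for infinitely many zeros. -/
lemma infinite_zeros_deriv {f f' : ℝ → ℝ} {s : Set ℝ} (hs : s.OrdConnected)
    (hd : ∀ r ∈ s, HasDerivAt f (f' r) r) (hz : (s ∩ {r | f r = 0}).Infinite) :
    (s ∩ {r | f' r = 0}).Infinite := by
  intro hfin
  obtain ⟨t, hts, htc⟩ := hz.exists_subset_card_eq (hfin.toFinset.card + 2)
  have := Finset.card_le_of_interleaved (s := t) (t := hfin.toFinset) (fun x hx y hy hxy _ => by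
    have hx' := hts hx
    have hy' := hts hy
    have hsub : Set.Icc x y ⊆ s := hs.out hx'.1 hy'.1
    obtain ⟨c, hc, h0⟩ := exists_hasDerivAt_eq_zero hxy
      (fun r hr => (hd r (hsub hr)).continuousAt.continuousWithinAt)
      (hx'.2.trans hy'.2.symm) (fun r hr => hd r (hsub (Set.Ioo_subset_Icc_self hr)))
    exact ⟨c, by simpa using ⟨hsub (Set.Ioo_subset_Icc_self hc), h0⟩, hc.1, hc.2⟩)
  omega

lemma Chain.infinite_zeros {n k : ℕ} {w p : ℕ → ℝ → ℝ} (h : Chain n k w p) {s : Set ℝ}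
    (hs : s.OrdConnected) (hs0 : s ⊆ Set.Ioi 0) (hz : (s ∩ {r | w 0 r = 0}).Infinite) :
    ∀ i < k, (s ∩ {r | w i r = 0}).Infinite ∧ (s ∩ {r | p i r = 0}).Infinite := by
  have hp : ∀ i < k, (s ∩ {r | w i r = 0}).Infinite → (s ∩ {r | p i r = 0}).Infinite := by
    intro i hi hw
    refine (infinite_zeros_deriv hs (fun r hr => (h i hi).dW r (hs0 hr)) hw).mono ?_
    rintro r ⟨hr, hr0⟩
    have : 0 < r := hs0 hr
    refine ⟨hr, ?_⟩
    simpa [this.ne'] using hr0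
  intro i
  induction i with
  | zero => exact fun hi => ⟨hz, hp 0 hi hz⟩
  | succ i ih =>
    intro hi
    have h1 : (s ∩ {r | w (i + 1) r = 0}).Infinite := by
      refine (infinite_zeros_deriv hs (fun r hr => (h i (by omega)).dP r (hs0 hr))
        (ih (by omega)).2).mono ?_
      rintro r ⟨hr, hr0⟩
      have : 0 < r := hs0 hr
      refine ⟨hr, ?_⟩
      simpa [this.ne'] using hr0
    exact ⟨h1, hp _ hi h1⟩

lemma eq_zero_of_norm_deriv_le {E : Type*} [NormedAddCommGroup E] [NormedSpace ℝ E]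
    {f f' : ℝ → E} {a b K : ℝ} (hd : ∀ r ∈ Set.Icc a b, HasDerivAt f (f' r) r)
    (hK : ∀ r ∈ Set.Icc a b, ‖f' r‖ ≤ K * ‖f r‖) (ha : f a = 0) : ∀ r ∈ Set.Icc a b, f r = 0 := by
  intro r hr
  have := norm_le_gronwallBound_of_norm_deriv_right_le (δ := 0) (ε := 0)
    (fun r hr => (hd r hr).continuousAt.continuousWithinAt)
    (fun r hr => (hd r (Set.Ico_subset_Icc_self hr)).hasDerivWithinAt) (by simp [ha])
    (fun r hr => by simpa using hK r (Set.Ico_subset_Icc_self hr)) r hr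
  rw [gronwallBound_ε0_δ0] at this
  exact norm_le_zero_iff.1 this

lemma eq_zero_of_norm_deriv_le' {E : Type*} [NormedAddCommGroup E] [NormedSpace ℝ E]
    {f f' : ℝ → E} {a b K : ℝ} (hd : ∀ r ∈ Set.Icc a b, HasDerivAt f (f' r) r)
    (hK : ∀ r ∈ Set.Icc a b, ‖f' r‖ ≤ K * ‖f r‖) (hb : f b = 0) : ∀ r ∈ Set.Icc a b, f r = 0 := by
  intro r hr
  have := eq_zero_of_norm_deriv_le (f := fun t => f (-t)) (f' := fun t => -f' (-t)) (a := -b)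
    (b := -a) (K := K)
    (fun t ht => by
      have h1 : -t ∈ Set.Icc a b := ⟨by linarith [ht.2], by linarith [ht.1]⟩
      simpa [Function.comp_def] using (hd (-t) h1).scomp t (hasDerivAt_neg t))
    (fun t ht => by simpa using hK (-t) ⟨by linarith [ht.2], by linarith [ht.1]⟩)
    (by simpa using hb) (-r) ⟨by linarith [hr.2], by linarith [hr.1]⟩
  simpa using this

/-- The hypotheses on the difference of two solutions that unique continuation needs: a chain
closed up by a bound of the last function by the first one. The exponents in `inf` are such that
one turn through the chain gains decay. -/
structure UC (n k : ℕ) (w p : ℕ → ℝ → ℝ) : Prop where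
  chain : Chain n k w p
  loc : ∀ R : ℝ, ∃ C, 0 ≤ C ∧ ∀ r, 0 < r → r ≤ R → |w k r| ≤ C * |w 0 r|
  inf : ∃ γ A C : ℝ, γ < n - 1 ∧ 0 ≤ A ∧ 0 ≤ C ∧ ∀ r : ℝ, 1 ≤ r → |w 0 r| ≤ A * r ^ (-γ) ∧
    |w k r| ≤ C * r ^ (-(n + 2 * k - 1 - γ)) * |w 0 r|

/-- If all data of the chain vanish at one positive radius, the solution vanishes, by Grönwall's
inequality for the first-order system. -/
lemma UC.of_point {n k : ℕ} (hk : 1 ≤ k) {w p : ℕ → ℝ → ℝ} (h : UC n k w p) {a : ℝ} (ha : 0 < a)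
    (h0 : ∀ i < k, w i a = 0 ∧ p i a = 0) : ∀ r > 0, w 0 r = 0 := by
  set Y : ℝ → Fin k → ℝ × ℝ := fun r i => (w i r, p i r) with hY
  set Y' : ℝ → Fin k → ℝ × ℝ := fun r i => (-(p i r / r ^ (n - 1)), r ^ (n - 1) * w (i + 1) r)
    with hY'
  have hd : ∀ r > 0, HasDerivAt Y (Y' r) r := fun r hr => hasDerivAt_pi.2 fun i =>
    ((h.chain i i.2).dW r hr).prodMk ((h.chain i i.2).dP r hr)
  have hYa : Y a = 0 := by
    funext i
    simp [hY, h0 i i.2]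
  have hbd : ∀ c d : ℝ, 0 < c → ∃ K, ∀ r ∈ Set.Icc c d, ‖Y' r‖ ≤ K * ‖Y r‖ := by
    intro c d hc
    obtain ⟨C, hC0, hC⟩ := h.loc d
    set L := 1 / c ^ (n - 1) + d ^ (n - 1) * (C + 1) with hL
    refine ⟨L, fun r hr => ?_⟩
    have hr0 : 0 < r := hc.trans_le hr.1
    have hd0 : 0 < d := hr0.trans_le hr.2
    have hw : ∀ i : Fin k, |w i r| ≤ ‖Y r‖ := fun i =>
      (norm_fst_le (Y r i)).trans (norm_le_pi_norm (Y r) i)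
    have hp : ∀ i : Fin k, |p i r| ≤ ‖Y r‖ := fun i =>
      (norm_snd_le (Y r i)).trans (norm_le_pi_norm (Y r) i)
    have hw1 : ∀ i : Fin k, |w (i + 1) r| ≤ (C + 1) * ‖Y r‖ := by
      intro i
      have := norm_nonneg (Y r)
      by_cases hi : (i : ℕ) + 1 < k
      · have := hw ⟨i + 1, hi⟩
        simp only at this
        nlinarith
      · rw [show (i : ℕ) + 1 = k by omega]
        have h1 := hC r hr0 hr.2
        have h2 := hw ⟨0, hk⟩
        simp only at h2
        nlinarith
    have hrn : r ^ (n - 1) ≤ d ^ (n - 1) := pow_le_pow_left₀ hr0.le hr.2 _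
    have hrn' : c ^ (n - 1) ≤ r ^ (n - 1) := pow_le_pow_left₀ hc.le hr.1 _
    have hcn : 0 < c ^ (n - 1) := pow_pos hc _
    have hdn : 0 < d ^ (n - 1) := pow_pos hd0 _
    refine (pi_norm_le_iff_of_nonneg (by positivity)).2 fun i => ?_
    refine norm_prod_le_iff.2 ⟨?_, ?_⟩
    · simp only [hY', norm_neg, norm_div, Real.norm_eq_abs]
      rw [abs_of_pos (pow_pos hr0 _)]
      calc |p i r| / r ^ (n - 1) ≤ ‖Y r‖ / c ^ (n - 1) := by
            gcongr
            exact hp i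
        _ = 1 / c ^ (n - 1) * ‖Y r‖ := by ring
        _ ≤ L * ‖Y r‖ := by
            gcongr
            rw [hL]
            have : 0 ≤ d ^ (n - 1) * (C + 1) := by positivity
            linarith
    · simp only [hY', norm_mul, Real.norm_eq_abs]
      rw [abs_of_pos (pow_pos hr0 _)]
      calc r ^ (n - 1) * |w (i + 1) r| ≤ d ^ (n - 1) * ((C + 1) * ‖Y r‖) := by
            gcongr
            exact hw1 i
        _ = d ^ (n - 1) * (C + 1) * ‖Y r‖ := by ring
        _ ≤ L * ‖Y r‖ := by
            gcongr
            rw [hL]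
            have : 0 ≤ 1 / c ^ (n - 1) := by positivity
            linarith
  intro r hr
  have hYr : Y r = 0 := by
    rcases le_total a r with har | har
    · obtain ⟨K, hK⟩ := hbd a r ha
      exact eq_zero_of_norm_deriv_le (fun t ht => hd t (ha.trans_le ht.1)) hK hYa r ⟨har, le_rfl⟩
    · obtain ⟨K, hK⟩ := hbd r a hr
      exact eq_zero_of_norm_deriv_le' (fun t ht => hd t (hr.trans_le ht.1)) hK hYa r ⟨le_rfl, har⟩
  have := congrFun hYr ⟨0, hk⟩
  simpa [hY] using congrArg Prod.fst this

lemma eq_zero_of_dense_zeros {f : ℝ → ℝ} {a : ℝ} (hf : ContinuousWithinAt f (Set.Ici 0) a)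
    (h : ∀ ε > 0, ∃ r, 0 ≤ r ∧ |r - a| < ε ∧ f r = 0) : f a = 0 := by
  have h1 : a ∈ closure (Set.Ici 0 ∩ {r | f r = 0}) := by
    rw [Metric.mem_closure_iff]
    intro ε hε
    obtain ⟨r, h1, h2, h3⟩ := h ε hε
    exact ⟨r, ⟨h1, h3⟩, by rwa [dist_comm, Real.dist_eq]⟩
  have h2 := (hf.mono Set.inter_subset_left).mem_closure h1 (t := {0}) (fun r hr => hr.2)
  simpa using h2

/-- Zeros accumulating at a positive radius: Rolle's theorem passes the accumulation on to all
data of the chain. -/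
lemma UC.of_acc {n k : ℕ} (hk : 1 ≤ k) {w p : ℕ → ℝ → ℝ} (h : UC n k w p) {a : ℝ} (ha : 0 < a)
    (h0 : ∀ ε > 0, (Set.Ioo (a - ε) (a + ε) ∩ {r | w 0 r = 0}).Infinite) :
    ∀ r > 0, w 0 r = 0 := by
  have hz : ∀ ε > 0, ∀ i < k, (∃ r, 0 ≤ r ∧ |r - a| < ε ∧ w i r = 0) ∧
      ∃ r, 0 ≤ r ∧ |r - a| < ε ∧ p i r = 0 := by
    intro ε hε i hi
    have hs := h.chain.infinite_zeros (s := Set.Ioo (a - min ε a) (a + min ε a)) Set.ordConnected_Ioo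
      (fun r hr => by
        have := min_le_right ε a
        exact lt_of_le_of_lt (by linarith) hr.1) (h0 _ (lt_min hε ha)) i hi
    have key : ∀ r ∈ Set.Ioo (a - min ε a) (a + min ε a), 0 ≤ r ∧ |r - a| < ε := by
      intro r hr
      have h1 := min_le_right ε a
      have h2 := min_le_left ε a
      refine ⟨by linarith [hr.1], abs_lt.2 ⟨by linarith [hr.1], by linarith [hr.2]⟩⟩
    obtain ⟨r, hr, hr'⟩ := hs.1.nonempty
    obtain ⟨t, ht, ht'⟩ := hs.2.nonempty
    exact ⟨⟨r, (key r hr).1, (key r hr).2, hr'⟩, ⟨t, (key t ht).1, (key t ht).2, ht'⟩⟩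
  exact h.of_point hk ha fun i hi =>
    ⟨eq_zero_of_dense_zeros ((h.chain i hi).cW a ha.le) fun ε hε => (hz ε hε i hi).1,
      eq_zero_of_dense_zeros ((h.chain i hi).cP a ha.le) fun ε hε => (hz ε hε i hi).2⟩

lemma UC.of_interval {n k : ℕ} (hk : 1 ≤ k) {w p : ℕ → ℝ → ℝ} (h : UC n k w p) {c d : ℝ}
    (hc : 0 ≤ c) (hcd : c < d) (h0 : ∀ r ∈ Set.Ioo c d, w 0 r = 0) : ∀ r > 0, w 0 r = 0 := by
  refine h.of_acc hk (a := (c + d) / 2) (by linarith) fun ε hε => ?_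
  refine (Set.Ioo_infinite (a := max c ((c + d) / 2 - ε)) (b := min d ((c + d) / 2 + ε)) ?_).mono ?_
  · rw [lt_min_iff, max_lt_iff, max_lt_iff]
    exact ⟨⟨by linarith, by linarith⟩, by linarith, by linarith⟩
  · intro r hr
    have h1 := max_lt_iff.1 hr.1
    have h2 := lt_min_iff.1 hr.2
    exact ⟨⟨h1.2, h2.2⟩, h0 r ⟨h1.1, h2.1⟩⟩

/-- A bounded quantity, each of whose nonnegative upper bounds can be halved, is nonpositive. -/
lemma nonpos_of_halving {S : Set ℝ} {v : ℝ → ℝ} {A : ℝ} (hA : 0 ≤ A) (hv : ∀ r ∈ S, v r ≤ A)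
    (h : ∀ B, 0 ≤ B → (∀ r ∈ S, v r ≤ B) → ∀ r ∈ S, v r ≤ B / 2) : ∀ r ∈ S, v r ≤ 0 := by
  have iter : ∀ m : ℕ, ∀ r ∈ S, v r ≤ A * (1 / 2) ^ m := by
    intro m
    induction m with
    | zero => simpa using hv
    | succ m ih =>
      intro r hr
      refine (h _ (by positivity) ih r hr).trans_eq ?_
      rw [pow_succ]; ring
  intro r hr
  have ht : Tendsto (fun m : ℕ => A * (1 / 2 : ℝ) ^ m) atTop (𝓝 (A * 0)) :=
    (tendsto_pow_atTop_nhds_zero_of_lt_one (by norm_num) (by norm_num)).const_mul A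
  rw [mul_zero] at ht
  exact ge_of_tendsto' ht fun m => iter m r hr

/-- Two integrations from the origin bound `W` by the right-hand side. -/
lemma RStep.small {n : ℕ} {W P g : ℝ → ℝ} (h : RStep n W P g) (hW : W 0 = 0)
    {B t : ℝ} (hB : 0 ≤ B) (hg : ∀ r, 0 < r → r ≤ t → |g r| ≤ B) :
    ∀ r, 0 < r → r ≤ t → |W r| ≤ t ^ 2 * B := by
  have hP : ∀ r, 0 < r → r ≤ t → |P r| ≤ B * t * r ^ (n - 1) := by
    intro r hr hrt
    have := abs_sub_le_of_deriv (F := P) (B := fun s => B * r ^ (n - 1) * s) hr.le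
      (h.cP.mono fun s hs => hs.1) (fun s hs => h.dP s hs.1) (by fun_prop)
      (fun s _ => (hasDerivAt_id s).const_mul _)
      (fun s hs => by
        have hs0 : 0 < s := hs.1
        rw [abs_mul, abs_of_pos (pow_pos hs0 _), mul_one, mul_comm]
        gcongr
        · exact hg s hs0 (hs.2.le.trans hrt)
        · exact hs.2.le)
    rw [h.P0, sub_zero, mul_zero, sub_zero] at this
    refine this.trans ?_
    have h1 : 0 ≤ B * r ^ (n - 1) := by positivity
    nlinarith
  intro r hr hrt
  have := abs_sub_le_of_deriv (F := W) (B := fun s => B * t * s) hr.le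
    (h.cW.mono fun s hs => hs.1) (fun s hs => h.dW s hs.1) (by fun_prop)
    (fun s _ => (hasDerivAt_id s).const_mul _)
    (fun s hs => by
      have hs0 : 0 < s := hs.1
      rw [abs_neg, abs_div, abs_of_pos (pow_pos hs0 _), div_le_iff₀ (pow_pos hs0 _), mul_one]
      exact hP s hs0 (hs.2.le.trans hrt))
  rw [hW, sub_zero, mul_zero, sub_zero] at this
  refine this.trans ?_
  have h1 : 0 ≤ B * t := mul_nonneg hB (hr.le.trans hrt)
  nlinarith

/-- Zeros accumulating at the origin: then every `w i` vanishes at `0`, and integrating the chain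
over a short interval halves any bound on `w 0`. -/
lemma UC.of_zero {n k : ℕ} (hk : 1 ≤ k) {w p : ℕ → ℝ → ℝ} (h : UC n k w p)
    (h0 : ∀ ε > 0, (Set.Ioo 0 ε ∩ {r | w 0 r = 0}).Infinite) :
    ∀ r > 0, w 0 r = 0 := by
  have hw0 : ∀ i < k, w i 0 = 0 := fun i hi =>
    eq_zero_of_dense_zeros ((h.chain i hi).cW 0 (Set.mem_Ici.2 le_rfl)) fun ε hε => by
      obtain ⟨r, hr, hr'⟩ := (h.chain.infinite_zeros Set.ordConnected_Ioo
        (fun r hr => hr.1) (h0 ε hε) i hi).1.nonempty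
      exact ⟨r, hr.1.le, by rw [sub_zero, abs_of_pos hr.1]; exact hr.2, hr'⟩
  obtain ⟨C, hC0, hC⟩ := h.loc 1
  set t : ℝ := 1 / (2 * (C + 1)) with ht
  have ht0 : 0 < t := by positivity
  have ht1 : t ≤ 1 := by
    rw [ht, div_le_one (by positivity)]; linarith
  have htC : t * C ≤ 1 / 2 := by
    rw [ht, div_mul_eq_mul_div, div_le_div_iff₀ (by positivity) (by positivity)]; linarith
  obtain ⟨A, hA⟩ := isCompact_Icc.exists_bound_of_continuousOn
    ((h.chain 0 hk).cW.mono (fun r (hr : r ∈ Set.Icc 0 t) => hr.1))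
  have key := nonpos_of_halving (S := Set.Ioc 0 t) (v := fun r => |w 0 r|) (A := max A 0)
    (le_max_right _ _) (fun r hr => (hA r ⟨hr.1.le, hr.2⟩).trans (le_max_left _ _))
    (fun B hB hvB => by
      have hj : ∀ j ≤ k, ∀ r, 0 < r → r ≤ t → |w (k - j) r| ≤ (t ^ 2) ^ j * (C * B) := by
        intro j
        induction j with
        | zero =>
          intro _ r hr hrt
          rw [pow_zero, one_mul, Nat.sub_zero]
          refine (hC r hr (hrt.trans ht1)).trans ?_
          gcongr
          exact hvB r ⟨hr, hrt⟩
        | succ j ih =>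
          intro hj
          have hstep := h.chain (k - (j + 1)) (by omega)
          rw [show k - (j + 1) + 1 = k - j by omega] at hstep
          have := hstep.small (hw0 _ (by omega)) (by positivity) (ih (by omega))
          intro r hr hrt
          refine (this r hr hrt).trans_eq ?_
          rw [pow_succ]; ring
      intro r hr
      have := hj k le_rfl r hr.1 hr.2
      rw [Nat.sub_self] at this
      refine this.trans ?_
      have h1 : (t ^ 2) ^ k ≤ t := by
        rw [← pow_mul]
        exact pow_le_of_le_one ht0.le ht1 (by omega)
      calc (t ^ 2) ^ k * (C * B) ≤ t * (C * B) := by gcongr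
        _ = t * C * B := by ring
        _ ≤ 1 / 2 * B := by gcongr
        _ = B / 2 := by ring)
  exact h.of_interval hk le_rfl ht0 fun r hr =>
    abs_eq_zero.1 (le_antisymm (key r ⟨hr.1, hr.2.le⟩) (abs_nonneg _))

/-- Integration from infinity of a function with arbitrarily large zeros. -/
lemma abs_le_of_zeros {F F' : ℝ → ℝ} {B c R : ℝ} (hB : 0 ≤ B) (hc : 1 ≤ c) (hR : 0 < R)
    (hd : ∀ r > 0, HasDerivAt F (F' r) r) (hF : ∀ r ≥ R, |F' r| ≤ B * r ^ (-c - 1))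
    (hz : ∀ r, ∃ ρ ≥ r, F ρ = 0) : ∀ r ≥ R, |F r| ≤ B * r ^ (-c) := by
  intro r hr
  obtain ⟨ρ, hρ, hρ0⟩ := hz r
  have hr0 : 0 < r := hR.trans_le hr
  have hdB := fun s (hs : 0 < s) => hasDerivAt_rpow_const_mul B (-c) hs (by linarith)
  have := abs_sub_le_of_deriv (F := F) (B := fun s => B / (-c) * s ^ (-c)) hρ
    (fun s hs => (hd s (hr0.trans_le hs.1)).continuousAt.continuousWithinAt)
    (fun s hs => hd s (hr0.trans hs.1))
    (fun s hs => (hdB s (hr0.trans_le hs.1)).continuousAt.continuousWithinAt)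
    (fun s hs => hdB s (hr0.trans hs.1)) (fun s hs => hF s (hr.trans hs.1.le))
  rw [hρ0, zero_sub, abs_neg] at this
  have h1 : 0 ≤ B / c * ρ ^ (-c) := by have := hr0.trans_le hρ; positivity
  have h2 : B / c ≤ B := div_le_self hB hc
  calc |F r| ≤ B / c * r ^ (-c) := by
        rw [div_neg] at this; linarith
    _ ≤ B * r ^ (-c) := by gcongr

/-- Two integrations from infinity, where `W` and `P` vanish along sequences, bound `W` by the
right-hand side at the cost of two powers of decay. -/
lemma RStep.large {n : ℕ} (hn : 2 ≤ n) {W P g : ℝ → ℝ} (h : RStep n W P g) {B b R : ℝ}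
    (hB : 0 ≤ B) (hR : 0 < R) (hb : (n : ℝ) + 1 ≤ b) (hg : ∀ r ≥ R, |g r| ≤ B * r ^ (-b))
    (hW : ∀ r, ∃ ρ ≥ r, W ρ = 0) (hP : ∀ r, ∃ ρ ≥ r, P ρ = 0) :
    ∀ r ≥ R, |W r| ≤ B * r ^ (2 - b) := by
  have hn' : (2 : ℝ) ≤ n := by exact_mod_cast hn
  have h1 := abs_le_of_zeros (c := b - n) hB (by linarith) hR h.dP (fun r hr => by
    have hr0 : 0 < r := hR.trans_le hr
    rw [abs_mul, abs_of_pos (pow_pos hr0 _)]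
    refine (mul_le_mul_of_nonneg_left (hg r hr) (pow_pos hr0 _).le).trans_eq ?_
    rw [pow_pred_eq_rpow (by omega), mul_left_comm, ← Real.rpow_add hr0]
    congr 2; ring) hP
  have h2 := abs_le_of_zeros (c := b - 2) hB (by linarith) hR h.dW (fun r hr => by
    have hr0 : 0 < r := hR.trans_le hr
    rw [abs_neg, abs_div, abs_of_pos (pow_pos hr0 _), div_le_iff₀ (pow_pos hr0 _)]
    refine (h1 r hr).trans_eq ?_
    rw [pow_pred_eq_rpow (by omega), mul_assoc, ← Real.rpow_add hr0]
    congr 2; ring) hW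
  intro r hr
  rw [← neg_sub b 2]
  exact h2 r hr

/-- Zeros accumulating at infinity: then every `w i` and `p i` has arbitrarily large zeros, and
integrating the chain from infinity over a far half-line halves any weighted bound on `w 0`. -/
lemma UC.of_infty {n k : ℕ} (hn : 2 ≤ n) (hk : 1 ≤ k) {w p : ℕ → ℝ → ℝ} (h : UC n k w p)
    (h0 : ∀ R, 0 < R → (Set.Ioi R ∩ {r | w 0 r = 0}).Infinite) :
    ∀ r > 0, w 0 r = 0 := by
  have hz : ∀ i < k, (∀ r, ∃ ρ ≥ r, w i ρ = 0) ∧ (∀ r, ∃ ρ ≥ r, p i ρ = 0) := by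
    intro i hi
    have := fun r => h.chain.infinite_zeros (s := Set.Ioi (max r 1)) Set.ordConnected_Ioi
      (fun s hs => Set.mem_Ioi.2 (one_pos.trans (max_lt_iff.1 hs).2)) (h0 _ (by positivity)) i hi
    refine ⟨fun r => ?_, fun r => ?_⟩
    · obtain ⟨ρ, h1, h2⟩ := (this r).1.nonempty
      exact ⟨ρ, (max_lt_iff.1 h1).1.le, h2⟩
    · obtain ⟨ρ, h1, h2⟩ := (this r).2.nonempty
      exact ⟨ρ, (max_lt_iff.1 h1).1.le, h2⟩
  obtain ⟨γ, A, C, hγ, hA, hC, hw⟩ := h.inf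
  have hk' : (1 : ℝ) ≤ k := by exact_mod_cast hk
  obtain ⟨R, hR1, hR⟩ : ∃ R ≥ (1 : ℝ), ∀ r ≥ R, C * r ^ (-((n - 1) - γ)) ≤ 1 / 2 := by
    have := (tendsto_rpow_neg_atTop (y := (n : ℝ) - 1 - γ) (by linarith)).const_mul C
    rw [mul_zero] at this
    obtain ⟨R, hR⟩ := eventually_atTop.1 (this.eventually (gt_mem_nhds (by norm_num : (0:ℝ) < 1/2)))
    exact ⟨max R 1, le_max_right _ _, fun r hr => (hR r ((le_max_left _ _).trans hr)).le⟩
  have hR0 : 0 < R := by linarith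
  have key := nonpos_of_halving (S := Set.Ici R) (v := fun r => r ^ γ * |w 0 r|) (A := A) hA
    (fun r hr => by
      have hr0 : 0 < r := hR0.trans_le hr
      have := (hw r (hR1.trans hr)).1
      rw [Real.rpow_neg hr0.le, ← div_eq_mul_inv, le_div_iff₀ (by positivity)] at this
      linarith)
    (fun B hB hvB => by
      have hj : ∀ j ≤ k, ∀ r ≥ R, |w (k - j) r| ≤ C * B * r ^ (2 * j - (n + 2 * k - 1 : ℝ)) := by
        intro j
        induction j with
        | zero =>
          intro _ r hr
          have hr0 : 0 < r := hR0.trans_le hr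
          rw [Nat.sub_zero]
          refine ((hw r (hR1.trans hr)).2).trans ?_
          have h1 : |w 0 r| ≤ B * r ^ (-γ) := by
            rw [Real.rpow_neg hr0.le, ← div_eq_mul_inv, le_div_iff₀ (by positivity)]
            have := hvB r hr
            linarith
          calc C * r ^ (-(n + 2 * k - 1 - γ)) * |w 0 r|
              ≤ C * r ^ (-(n + 2 * k - 1 - γ)) * (B * r ^ (-γ)) := by gcongr
            _ = C * B * (r ^ (-(n + 2 * k - 1 - γ)) * r ^ (-γ)) := by ring
            _ = _ := by
              rw [← Real.rpow_add hr0]; congr 2; push_cast; ring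
        | succ j ih =>
          intro hj
          have hjk : (j : ℝ) + 1 ≤ k := by exact_mod_cast hj
          have hstep := h.chain (k - (j + 1)) (by omega)
          rw [show k - (j + 1) + 1 = k - j by omega] at hstep
          have := hstep.large hn (B := C * B) (b := n + 2 * k - 1 - 2 * j) (by positivity) hR0
            (by linarith)
            (fun r hr => by rw [neg_sub]; exact ih (by omega) r hr)
            (hz _ (by omega)).1 (hz _ (by omega)).2
          intro r hr
          refine (this r hr).trans_eq ?_
          congr 2; push_cast; ring
      intro r hr
      have hr0 : 0 < r := hR0.trans_le hr
      have h1 := hj k le_rfl r hr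
      rw [Nat.sub_self] at h1
      calc r ^ γ * |w 0 r| ≤ r ^ γ * (C * B * r ^ (2 * k - (n + 2 * k - 1 : ℝ))) := by gcongr
        _ = C * (r ^ γ * r ^ (2 * k - (n + 2 * k - 1 : ℝ))) * B := by ring
        _ = C * r ^ (-((n - 1) - γ)) * B := by
            rw [← Real.rpow_add hr0]; congr 3; ring
        _ ≤ 1 / 2 * B := by gcongr; exact hR r hr
        _ = B / 2 := by ring)
  exact h.of_interval hk hR0.le (lt_add_one R) fun r hr => by
    have hr0 : 0 < r := hR0.trans hr.1
    have h1 := key r hr.1.le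
    have h2 : 0 < r ^ γ := by positivity
    exact abs_eq_zero.1 (le_antisymm (by nlinarith) (abs_nonneg _))

/-- Unique continuation: infinitely many zeros accumulate at a point of `(0, ∞)`, at the origin or
at infinity, and each kind of accumulation forces the solution to vanish. -/
lemma UC.eq_zero {n k : ℕ} (hn : 2 ≤ n) (hk : 1 ≤ k) {w p : ℕ → ℝ → ℝ} (h : UC n k w p)
    (h0 : {r : ℝ | 0 < r ∧ w 0 r = 0}.Infinite) : ∀ r > 0, w 0 r = 0 := by
  by_cases hinf : ∀ R, 0 < R → (Set.Ioi R ∩ {r | w 0 r = 0}).Infinite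
  · exact h.of_infty hn hk hinf
  push Not at hinf
  obtain ⟨R, hR, hfin⟩ := hinf
  have hZ : (Set.Icc 0 R ∩ {r | 0 < r ∧ w 0 r = 0}).Infinite := by
    intro hf
    refine h0 ((hf.union hfin).subset ?_)
    rintro r ⟨hr, hr0⟩
    rcases le_or_gt r R with hrR | hrR
    · exact Or.inl ⟨⟨hr.le, hrR⟩, hr, hr0⟩
    · exact Or.inr ⟨hrR, hr0⟩
  obtain ⟨a, ha, hacc⟩ := hZ.exists_accPt_of_subset_isCompact isCompact_Icc Set.inter_subset_left
  have hA : ∀ ε > 0, (Set.Ioo (a - ε) (a + ε) ∩ {r | 0 < r ∧ w 0 r = 0}).Infinite := fun ε hε =>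
    (Set.Infinite.of_accPt (hacc.nhds_inter (Ioo_mem_nhds (by linarith) (by linarith)))).mono
      fun r hr => ⟨hr.1, hr.2.2⟩
  rcases ha.1.eq_or_lt with rfl | ha0
  · refine h.of_zero hk fun ε hε => (hA ε hε).mono fun r hr => ?_
    exact ⟨⟨hr.2.1, by linarith [hr.1.2]⟩, hr.2.2⟩
  · exact h.of_acc hk ha0 fun ε hε => (hA ε hε).mono fun r hr => ⟨hr.1, hr.2.2⟩

/-! ### Uniqueness for the radial problem -/

lemma Sol.abs_sub_le {n k : ℕ} {α : ℝ} (hk : 1 ≤ k) (hα : 0 < α) {φ P ψ Q : ℕ → ℝ → ℝ}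
    (h : Sol n k α φ P) (h' : Sol n k α ψ Q) {r m : ℝ} (hr : 0 < r) (h1 : |φ 0 r| ≤ m)
    (h2 : |ψ 0 r| ≤ m) :
    |φ k r - ψ k r| ≤ (2 * k / α + 1) * m ^ (2 * k / α) * |φ 0 r - ψ 0 r| := by
  have hk' : (1 : ℝ) ≤ k := by exact_mod_cast hk
  rw [h.eq r hr, h'.eq r hr, ← mul_sub, abs_mul, abs_pow, abs_neg, abs_one, one_pow, one_mul]
  exact rpow_mul_self_lip (by positivity) h1 h2

lemma Sol.uc {n k : ℕ} {α : ℝ} (hk : 1 ≤ k) (hα : 0 < α)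
    (hn : (n : ℝ) = 2 * k + 2 * α) {φ P ψ Q : ℕ → ℝ → ℝ} (h : Sol n k α φ P)
    (h' : Sol n k α ψ Q) :
    UC n k (fun i r => φ i r - ψ i r) (fun i r => P i r - Q i r) where
  chain i hi := (h.chain i hi).sub (h'.chain i hi)
  loc R := by
    have hk' : (1 : ℝ) ≤ k := by exact_mod_cast hk
    obtain ⟨A, hA⟩ := isCompact_Icc.exists_bound_of_continuousOn
      ((h.chain 0 hk).cW.mono (fun r (hr : r ∈ Set.Icc 0 R) => hr.1))
    obtain ⟨B, hB⟩ := isCompact_Icc.exists_bound_of_continuousOn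
      ((h'.chain 0 hk).cW.mono (fun r (hr : r ∈ Set.Icc 0 R) => hr.1))
    refine ⟨(2 * k / α + 1) * (max (max A B) 0) ^ (2 * k / α), by positivity, fun r hr hrR => ?_⟩
    exact h.abs_sub_le hk hα h' hr
      ((hA r ⟨hr.le, hrR⟩).trans ((le_max_left _ _).trans (le_max_left _ _)))
      ((hB r ⟨hr.le, hrR⟩).trans ((le_max_right _ _).trans (le_max_left _ _)))
  inf := by
    have hk' : (1 : ℝ) ≤ k := by exact_mod_cast hk
    -- this decay rate makes `|φ| ^ q` gain exactly the power required in `UC.inf`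
    set θ : ℝ := α / (α + 2 * k) with hθ
    have hθ0 : 0 < θ := by positivity
    have hθα : θ < α := by
      rw [hθ, div_lt_iff₀ (by positivity)]
      nlinarith
    obtain ⟨A, hA0, hA⟩ := h.strong_decay hk hα hn (δ := α - θ) (by linarith) (by linarith)
    obtain ⟨B, hB0, hB⟩ := h'.strong_decay hk hα hn (δ := α - θ) (by linarith) (by linarith)
    refine ⟨2 * α - θ, A + B, (2 * k / α + 1) * (A + B) ^ (2 * k / α), by linarith, by positivity,
      by positivity, fun r hr => ?_⟩
    have hr0 : 0 < r := by linarith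
    have h1 := hA r hr0
    have h2 := hB r hr0
    rw [show -α - (α - θ) = -(2 * α - θ) by ring] at h1 h2
    have hp : 0 ≤ r ^ (-(2 * α - θ)) := by positivity
    refine ⟨(abs_sub _ _).trans (by nlinarith), ?_⟩
    refine (h.abs_sub_le hk hα h' hr0 (m := (A + B) * r ^ (-(2 * α - θ))) (by nlinarith)
      (by nlinarith)).trans_eq ?_
    rw [Real.mul_rpow (by positivity) hp, ← Real.rpow_mul hr0.le, ← mul_assoc]
    congr 3
    rw [hn, hθ]
    field_simp
    ring

lemma Chain.alt {n k : ℕ} {w p : ℕ → ℝ → ℝ} (h : Chain n k w p)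
    (h0 : ∀ i < k, Tendsto (w i) atTop (𝓝 0)) {σ : ℝ} {N i j : ℕ} (hij : i ≤ j) (hj : j ≤ k)
    (hA : Alt (w i) σ N) : Alt (w j) σ N := by
  induction j, hij using Nat.le_induction with
  | base => exact hA
  | succ j hij ih => exact (h j (by omega)).alt (h0 j (by omega)) (ih (by omega))

/-- Uniqueness of solutions with `φ = o(r ^ (-α))`, given the value at the origin if `k` is even.
By Rolle's theorem, going once through the chain cannot decrease the number of sign changes of the
difference of two solutions; since the last function of the chain has, up to the factor `(-1) ^ k`,
the sign of the first one, the number of sign changes increases strictly if `k` is odd or if the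
difference vanishes at the origin. So there are infinitely many zeros, and unique continuation
applies. -/
theorem Sol.unique {n k : ℕ} {α : ℝ} (hk : 1 ≤ k) (hα : 0 < α)
    (hn : (n : ℝ) = 2 * k + 2 * α) {φ P ψ Q : ℕ → ℝ → ℝ} (h : Sol n k α φ P)
    (h' : Sol n k α ψ Q) (h0 : Odd k ∨ φ 0 0 = ψ 0 0) : ∀ r > 0, φ 0 r = ψ 0 r := by
  have hk' : (1 : ℝ) ≤ k := by exact_mod_cast hk
  have hn2 : 2 ≤ n := by
    have : (2 : ℝ) ≤ n := by linarith
    exact_mod_cast this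
  have hq : 0 < 2 * k / α := by positivity
  have hUC := h.uc hk hα hn h'
  set w : ℕ → ℝ → ℝ := fun i r => φ i r - ψ i r with hw
  have hch := hUC.chain
  have hlim : ∀ i ≤ k, Tendsto (w i) atTop (𝓝 0) := fun i hi => by
    simpa using (h.tendsto hk hα hn i hi).sub (h'.tendsto hk hα hn i hi)
  have hsgn : ∀ r > 0, ∀ s, 0 < s * w k r → 0 < (-1) ^ k * s * w 0 r := by
    intro r hr s hs
    simp only [hw, h.eq r hr, h'.eq r hr, ← mul_sub] at hs ⊢
    rw [← mul_assoc, mul_comm s] at hs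
    have hmono := rpow_mul_self_strictMono hq
    rcases pos_and_pos_or_neg_and_neg_of_mul_pos hs with ⟨h1, h2⟩ | ⟨h1, h2⟩
    · exact mul_pos h1 (sub_pos.2 (hmono.lt_iff_lt.1 (sub_pos.1 h2)))
    · exact mul_pos_of_neg_of_neg h1 (sub_neg.2 (hmono.lt_iff_lt.1 (sub_neg.1 h2)))
  have hturn : ∀ σ N, Alt (w k) σ N → Alt (w 0) ((-1) ^ k * σ) N := fun σ N hA =>
    hA.congr_sign fun r hr s hs => by
      have := hsgn r hr _ hs
      rwa [← mul_assoc] at this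
  have hstep : ∀ N, (∃ σ, Alt (w 0) σ N) → ∃ σ, Alt (w 0) σ (N + 1) := by
    rintro N ⟨σ, hσ⟩
    rcases Nat.even_or_odd k with hev | hodd
    · have hw0 : w 0 0 = 0 := by
        rcases h0 with h0 | h0
        · exact absurd hev (Nat.not_even_iff_odd.2 h0)
        · simp [hw, h0]
      have h1 := (hch 0 hk).alt_gain (hlim 0 (by omega)) hw0 hσ
      exact ⟨_, hturn _ _ (hch.alt (fun i hi => hlim i hi.le) hk le_rfl h1)⟩
    · have h1 := hturn _ _ (hch.alt (fun i hi => hlim i hi.le) (Nat.zero_le k) le_rfl hσ)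
      rw [hodd.neg_one_pow, neg_one_mul] at h1
      rcases hσ.merge h1 with h2 | h2
      · exact ⟨_, h2⟩
      · exact ⟨_, h2⟩
  by_contra hne
  push Not at hne
  obtain ⟨r, hr, hne⟩ := hne
  have hwr : w 0 r ≠ 0 := sub_ne_zero.2 hne
  have hall : ∀ N, ∃ σ, Alt (w 0) σ N := by
    intro N
    induction N with
    | zero =>
      refine ⟨w 0 r, fun _ => r, hr, fun i hi => absurd hi (Nat.not_lt_zero i), fun i hi => ?_⟩
      obtain rfl : i = 0 := by omega
      rw [pow_zero, mul_one]
      exact mul_self_pos.2 hwr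
    | succ N ih => exact hstep N ih
  have hinf := infinite_zeros_of_alt ((hch 0 hk).cW.mono Set.Ioi_subset_Ici_self) hall
  exact hwr (hUC.eq_zero hn2 hk hinf r hr)

/-! ### The bubbles -/

lemma RStep.congr_right {n : ℕ} {W P g g' : ℝ → ℝ} (h : RStep n W P g) (e : g' = g) :
    RStep n W P g' := by
  rw [e]; exact h

lemma RStep.bubble (n : ℕ) (hn : 1 ≤ n) {l : ℝ} (hl : 0 < l) (a : ℝ) :
    RStep n (fun r => (1 + l * r ^ 2) ^ (-a)) (fun r => 2 * a * l * r ^ n * (1 + l * r ^ 2) ^ (-(a + 1)))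
      (fun r => l * (2 * a * (n - 2 * a - 2) * (1 + l * r ^ 2) ^ (-(a + 1)) +
        4 * a * (a + 1) * (1 + l * r ^ 2) ^ (-(a + 2)))) := by
  have hpos : ∀ r : ℝ, 0 < 1 + l * r ^ 2 := fun r => by positivity
  have hd : ∀ a r : ℝ, HasDerivAt (fun r : ℝ => (1 + l * r ^ 2) ^ (-a))
      (-(2 * a * l * r * (1 + l * r ^ 2) ^ (-(a + 1)))) r := by
    intro a r
    have h1 : HasDerivAt (fun r : ℝ => 1 + l * r ^ 2) (l * (2 * r)) r := by
      simpa using ((hasDerivAt_pow 2 r).const_mul l).const_add 1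
    refine (h1.rpow_const (p := -a) (Or.inl (hpos r).ne')).congr_deriv ?_
    rw [show -a - 1 = -(a + 1) by ring]
    ring
  have hc : ∀ a : ℝ, Continuous (fun r : ℝ => (1 + l * r ^ 2) ^ (-a)) := fun a =>
    continuous_iff_continuousAt.2 fun r => (hd a r).continuousAt
  obtain ⟨m, rfl⟩ : ∃ m, n = m + 1 := ⟨n - 1, by omega⟩
  refine ⟨(hc a).continuousOn, Continuous.continuousOn (by have := hc (a + 1); fun_prop), by simp,
    fun r hr => (hd a r).congr_deriv ?_, fun r hr => ?_⟩
  · have : r ^ m ≠ 0 := by positivity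
    rw [Nat.add_sub_cancel]
    field_simp
    ring
  · refine (((hasDerivAt_pow (m + 1) r).const_mul (2 * a * l)).mul (hd (a + 1) r)).congr_deriv ?_
    have h2 : (1 + l * r ^ 2) ^ (-(a + 1)) = (1 + l * r ^ 2) * (1 + l * r ^ 2) ^ (-(a + 2)) := by
      rw [show -(a + 1) = 1 + -(a + 2) by ring, Real.rpow_add (hpos r), Real.rpow_one]
    rw [show a + 1 + 1 = a + 2 by ring, h2, Nat.add_sub_cancel]
    push_cast
    ring

/-- `E_a = Γ(a) (1 + l r²)^{-a}`; with this normalisation `-Δ E_a` has coefficients affine in `a`. -/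
def bubE (l a : ℝ) (r : ℝ) : ℝ := Real.Gamma a * (1 + l * r ^ 2) ^ (-a)

lemma rstep_bubE (n : ℕ) (hn : 1 ≤ n) {l : ℝ} (hl : 0 < l) {a : ℝ} (ha : 0 < a) :
    RStep n (bubE l a)
      (fun r => Real.Gamma a * (2 * a * l * r ^ n * (1 + l * r ^ 2) ^ (-(a + 1))))
      (fun r => 4 * l * ((n / 2 - 1 - a) * bubE l (a + 1) r + bubE l (a + 2) r)) := by
  have h := (RStep.bubble n hn hl a).const_mul (Real.Gamma a)
  have h1 : Real.Gamma (a + 1) = a * Real.Gamma a := Real.Gamma_add_one ha.ne'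
  have h2 : Real.Gamma (a + 2) = (a + 1) * (a * Real.Gamma a) := by
    rw [show a + 2 = (a + 1) + 1 by ring, Real.Gamma_add_one (by positivity), h1]
  have e : (fun r => 4 * l * ((n / 2 - 1 - a) * bubE l (a + 1) r + bubE l (a + 2) r)) =
      fun r => Real.Gamma a * (l * (2 * a * (n - 2 * a - 2) * (1 + l * r ^ 2) ^ (-(a + 1)) +
        4 * a * (a + 1) * (1 + l * r ^ 2) ^ (-(a + 2)))) := by
    funext r
    simp only [bubE, h1, h2]
    rw [show -(a + 1) = -1 - a by ring, show -(a + 2) = -2 - a by ring]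
    ring
  rw [e]
  exact h

/-- Coefficients of the iterated Laplacians of the bubble in terms of the functions `bubE`. -/
def bubC (k j i : ℕ) : ℝ := (j.choose i : ℝ) * ∏ m ∈ Finset.range i, ((k : ℝ) - j + m)

/-- The recursion for the coefficients that `-Δ` imposes through `rstep_bubE`. -/
lemma bubC_succ (k j i : ℕ) : bubC k (j + 1) (i + 1) =
    bubC k j (i + 1) + bubC k j i * ((k : ℝ) - 1 - 2 * j + i) := by
  have h1 : ((j.choose (i + 1) : ℕ) : ℝ) * (i + 1) = (j.choose i : ℝ) * (j - i) := by
    rcases le_or_gt i j with hij | hij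
    · have := Nat.choose_succ_right_eq j i
      rw [← Nat.cast_sub hij]
      exact_mod_cast this
    · rw [Nat.choose_eq_zero_of_lt hij, Nat.choose_eq_zero_of_lt (by omega)]; simp
  simp only [bubC]
  rw [Finset.prod_range_succ' _ i, Finset.prod_range_succ _ i, Nat.choose_succ_succ]
  have h2 : ∏ m ∈ Finset.range i, ((k : ℝ) - (j + 1 : ℕ) + (m + 1 : ℕ)) =
      ∏ m ∈ Finset.range i, ((k : ℝ) - j + m) :=
    Finset.prod_congr rfl fun m _ => by push_cast; ring
  rw [h2]
  push_cast
  linear_combination (-1) * (∏ m ∈ Finset.range i, ((k : ℝ) - j + m)) * h1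

lemma bubC_zero (k j : ℕ) : bubC k j 0 = 1 := by simp [bubC]

lemma bubC_self_succ (k j : ℕ) : bubC k j (j + 1) = 0 := by simp [bubC]

lemma bubC_last (k i : ℕ) : bubC k k (i + 1) = 0 := by
  simp [bubC, Finset.prod_range_succ']

/-- The iterated Laplacians `(-Δ)^j E_α` in dimension `2 k + 2 α`. -/
def bubPhi (k : ℕ) (l α : ℝ) (j : ℕ) (r : ℝ) : ℝ :=
  (4 * l) ^ j * ∑ i ∈ Finset.range (j + 1), bubC k j i * bubE l (α + 2 * j - i) r

lemma bubPhi_chain (n k : ℕ) (hk : 1 ≤ k) {l α : ℝ} (hl : 0 < l) (hα : 0 < α)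
    (hn : (n : ℝ) = 2 * k + 2 * α) : ∃ P, Chain n k (bubPhi k l α) P := by
  have hk' : (1 : ℝ) ≤ k := by exact_mod_cast hk
  have hn1 : 1 ≤ n := by
    have : (1 : ℝ) ≤ n := by linarith
    exact_mod_cast this
  have key : ∀ j, ∃ P, RStep n (bubPhi k l α j) P (bubPhi k l α (j + 1)) := by
    intro j
    have h := (RStep.sum (n := n) (Finset.range (j + 1)) (fun i hi =>
      (rstep_bubE n hn1 hl (a := α + 2 * j - i) (by
        have : (i : ℝ) ≤ j := by exact_mod_cast Nat.lt_succ_iff.1 (Finset.mem_range.1 hi)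
        have : (0 : ℝ) ≤ j := Nat.cast_nonneg j
        linarith)).const_mul (bubC k j i))).const_mul ((4 * l) ^ j)
    refine ⟨_, h.congr_right ?_⟩
    funext r
    simp only [bubPhi]
    set G : ℕ → ℝ := fun i => bubE l (α + 2 * (j + 1 : ℕ) - i) r with hG
    have e1 : ∀ i : ℕ, bubE l (α + 2 * j - i + 2) r = G i := fun i => by
      simp only [hG]; congr 1; push_cast; ring
    have e2 : ∀ i : ℕ, bubE l (α + 2 * j - i + 1) r = G (i + 1) := fun i => by
      simp only [hG]; congr 1; push_cast; ring
    simp only [e1, e2]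
    change (4 * l) ^ (j + 1) * ∑ i ∈ Finset.range (j + 1 + 1), bubC k (j + 1) i * G i = _
    rw [Finset.sum_range_succ', bubC_zero]
    simp only [bubC_succ]
    have h3 : ∑ i ∈ Finset.range (j + 1), bubC k j i * G i =
        ∑ i ∈ Finset.range (j + 1), bubC k j (i + 1) * G (i + 1) + G 0 := by
      rw [Finset.sum_range_succ' _ j, Finset.sum_range_succ _ j, bubC_self_succ, bubC_zero]
      ring
    have h4 : ∑ i ∈ Finset.range (j + 1), bubC k j i *
        (4 * l * (((n : ℝ) / 2 - 1 - (α + 2 * j - i)) * G (i + 1) + G i)) =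
        4 * l * (∑ i ∈ Finset.range (j + 1), bubC k j i * ((k : ℝ) - 1 - 2 * j + i) * G (i + 1) +
          ∑ i ∈ Finset.range (j + 1), bubC k j i * G i) := by
      rw [← Finset.sum_add_distrib, Finset.mul_sum]
      refine Finset.sum_congr rfl fun i _ => ?_
      rw [hn]; ring
    rw [h4, h3]
    simp only [add_mul, Finset.sum_add_distrib]
    ring
  choose P hP using key
  exact ⟨P, fun i _ => hP i⟩

/-- In the critical dimension all coefficients of `(-Δ)^k E_α` but one vanish. -/
lemma bubPhi_last (k : ℕ) (l α r : ℝ) :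
    bubPhi k l α k r = (4 * l) ^ k * bubE l (α + 2 * k) r := by
  rw [bubPhi, Finset.sum_range_succ', bubC_zero]
  simp [bubC_last]

lemma Gamma_add_nat {α : ℝ} (hα : 0 < α) (m : ℕ) :
    Real.Gamma (α + m) = (∏ j ∈ Finset.range m, (α + j)) * Real.Gamma α := by
  induction m with
  | zero => simp
  | succ m ih =>
    rw [Finset.prod_range_succ, Nat.cast_succ, ← add_assoc, Real.Gamma_add_one (by positivity), ih]
    ring

/-- The bubbles, as solutions of the radial problem for even `k`. -/
lemma exists_bubble {n k : ℕ} {α : ℝ} (hk : 1 ≤ k) (hev : Even k) (hα : 0 < α)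
    (hn : (n : ℝ) = 2 * k + 2 * α) {a : ℝ} (ha : 0 < a)
    (hak : a ^ k * ∏ j ∈ Finset.range (2 * k), (2 * α + 2 * (j : ℝ)) = 1) {μ : ℝ} (hμ : 0 < μ)
    {ε : ℝ} (hε : |ε| = 1) :
    ∃ φ P, Sol n k α φ P ∧ ∀ r, φ 0 r = ε * (μ / (μ ^ 2 + a * r ^ 2)) ^ α := by
  have hΓ : 0 < Real.Gamma α := Real.Gamma_pos_of_pos hα
  set l : ℝ := a / μ ^ 2 with hl
  have hl0 : 0 < l := by positivity
  set c : ℝ := ε * μ ^ (-α) with hc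
  obtain ⟨P, hP⟩ := bubPhi_chain n k hk hl0 hα hn
  have hφ0 : ∀ r, c / Real.Gamma α * bubPhi k l α 0 r = c * (1 + l * r ^ 2) ^ (-α) := by
    intro r
    simp only [bubPhi, bubE, zero_add, Finset.range_one, Finset.sum_singleton, bubC_zero, pow_zero]
    simp
    field_simp
  have hconst : (4 * l) ^ k * Real.Gamma (α + 2 * k) = μ ^ (-(2 * k : ℝ)) * Real.Gamma α := by
    have h1 := Gamma_add_nat hα (2 * k)
    push_cast at h1
    have h2 : ∏ j ∈ Finset.range (2 * k), (2 * α + 2 * (j : ℝ)) =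
        4 ^ k * ∏ j ∈ Finset.range (2 * k), (α + j) := by
      rw [show (4 : ℝ) ^ k = 2 ^ (2 * k) by rw [pow_mul]; norm_num]
      simp only [← mul_add, Finset.prod_mul_distrib, Finset.prod_const, Finset.card_range]
    rw [h2] at hak
    have h3 : μ ^ (-(2 * k : ℝ)) * (μ ^ 2) ^ k = 1 := by
      rw [← pow_mul, ← Real.rpow_natCast, ← Real.rpow_add hμ]
      push_cast
      rw [neg_add_cancel, Real.rpow_zero]
    have h4 : l ^ k * (μ ^ 2) ^ k = a ^ k := by
      rw [← mul_pow, hl, div_mul_cancel₀ _ (by positivity)]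
    have h5 : 0 < (μ ^ 2) ^ k := by positivity
    rw [h1, mul_pow]
    apply mul_right_cancel₀ h5.ne'
    linear_combination (4 ^ k * (∏ j ∈ Finset.range (2 * k), (α + j)) * Real.Gamma α) * h4
      + Real.Gamma α * hak - Real.Gamma α * h3
  have hpos : ∀ r : ℝ, 0 < 1 + l * r ^ 2 := fun r => by positivity
  refine ⟨fun i r => c / Real.Gamma α * bubPhi k l α i r, fun i r => c / Real.Gamma α * P i r,
    ⟨fun i hi => (hP i hi).const_mul _, fun r hr => ?_, ?_⟩, fun r => ?_⟩
  · simp only [hφ0, bubPhi_last]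
    have h1 : |c * (1 + l * r ^ 2) ^ (-α)| ^ (2 * k / α) =
        μ ^ (-(2 * k : ℝ)) * (1 + l * r ^ 2) ^ (-(2 * k : ℝ)) := by
      rw [hc, abs_mul, abs_mul, hε, one_mul, abs_of_pos (Real.rpow_pos_of_pos hμ _),
        abs_of_pos (Real.rpow_pos_of_pos (hpos r) _),
        Real.mul_rpow (by positivity) (Real.rpow_pos_of_pos (hpos r) _).le,
        ← Real.rpow_mul hμ.le, ← Real.rpow_mul (hpos r).le,
        show -α * (2 * k / α) = -(2 * k) by field_simp]
    have h2 : (1 + l * r ^ 2) ^ (-(α + 2 * k)) =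
        (1 + l * r ^ 2) ^ (-(2 * k : ℝ)) * (1 + l * r ^ 2) ^ (-α) := by
      rw [← Real.rpow_add (hpos r)]; congr 1; ring
    rw [hev.neg_one_pow, one_mul, h1, bubE, h2]
    calc c / Real.Gamma α * ((4 * l) ^ k * (Real.Gamma (α + 2 * k) *
          ((1 + l * r ^ 2) ^ (-(2 * k : ℝ)) * (1 + l * r ^ 2) ^ (-α))))
        = c / Real.Gamma α * ((4 * l) ^ k * Real.Gamma (α + 2 * k)) *
          ((1 + l * r ^ 2) ^ (-(2 * k : ℝ)) * (1 + l * r ^ 2) ^ (-α)) := by ring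
      _ = _ := by rw [hconst]; field_simp
  · simp only [hφ0]
    refine squeeze_zero_norm' (a := fun r : ℝ => |c| * l ^ (-α) * r ^ (-α)) ?_ ?_
    · filter_upwards [eventually_gt_atTop 0] with r hr
      rw [Real.norm_eq_abs, abs_mul, abs_mul, abs_of_pos (Real.rpow_pos_of_pos hr _),
        abs_of_pos (Real.rpow_pos_of_pos (hpos r) _)]
      have h1 : (1 + l * r ^ 2) ^ (-α) ≤ l ^ (-α) * (r ^ (-α) * r ^ (-α)) := by
        rw [← Real.mul_rpow hr.le hr.le, ← Real.mul_rpow hl0.le (by positivity)]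
        refine Real.rpow_le_rpow_of_nonpos (by positivity) ?_ (by linarith)
        rw [← sq]; linarith
      have h2 : r ^ α * r ^ (-α) = 1 := by rw [← Real.rpow_add hr, add_neg_cancel, Real.rpow_zero]
      calc r ^ α * (|c| * (1 + l * r ^ 2) ^ (-α))
          ≤ r ^ α * (|c| * (l ^ (-α) * (r ^ (-α) * r ^ (-α)))) := by gcongr
        _ = (r ^ α * r ^ (-α)) * (|c| * l ^ (-α) * r ^ (-α)) := by ring
        _ = _ := by rw [h2, one_mul]
    · simpa using (tendsto_rpow_neg_atTop hα).const_mul (|c| * l ^ (-α))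
  · change c / Real.Gamma α * bubPhi k l α 0 r = _
    rw [hφ0, hc, Real.rpow_neg hμ.le, Real.rpow_neg (hpos r).le, mul_assoc, ← Real.inv_rpow hμ.le,
      ← Real.inv_rpow (hpos r).le, ← Real.mul_rpow (by positivity) (inv_pos.2 (hpos r)).le]
    congr 2
    rw [hl]
    have h1 : μ ^ 2 + a * r ^ 2 ≠ 0 := by positivity
    have h2 : 1 + a / μ ^ 2 * r ^ 2 ≠ 0 := by positivity
    field_simp

/-! ### Radial functions on Euclidean space -/

/-- Along the ray spanned by a unit vector `e`, a directional derivative of a function is the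
ordinary derivative of its restriction. -/
lemma hasDerivAt_ray {E F : Type*} [NormedAddCommGroup E] [NormedSpace ℝ E] [NormedAddCommGroup F]
    [NormedSpace ℝ F] {W : E → F} (hW : Differentiable ℝ W) (e : E) (r : ℝ) :
    HasDerivAt (fun r : ℝ => W (r • e)) (fderiv ℝ W (r • e) e) r := by
  have h1 : HasDerivAt (fun r : ℝ => r • e) e r := by
    simpa using (hasDerivAt_id r).smul_const e
  exact (hW (r • e)).hasFDerivAt.comp_hasDerivAt r h1

/-- A radial function is constant along the circle through `r e` in the plane of `e ⊥ b`;
differentiating twice along it computes the tangential second derivative. -/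
lemma fderiv_fderiv_tangent {E : Type*} [NormedAddCommGroup E] [InnerProductSpace ℝ E]
    {W : E → ℝ} (hW : ContDiff ℝ 2 W) (hrad : ∀ x y, ‖x‖ = ‖y‖ → W x = W y) {e b : E}
    (he : ‖e‖ = 1) (hb : ‖b‖ = 1) (heb : inner ℝ e b = 0) {r : ℝ} (hr : 0 < r) :
    fderiv ℝ (fderiv ℝ W) (r • e) b b = fderiv ℝ W (r • e) e / r := by
  have hW1 : Differentiable ℝ W := hW.differentiable (by norm_num)
  have hW2 : Differentiable ℝ (fderiv ℝ W) :=
    (hW.fderiv_right (m := 1) (by norm_num)).differentiable (by norm_num)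
  set γ : ℝ → E := fun s => (Real.cos s * r) • e + (Real.sin s * r) • b with hγ
  set γ' : ℝ → E := fun s => (-Real.sin s * r) • e + (Real.cos s * r) • b with hγ'
  have d1 : ∀ s, HasDerivAt γ (γ' s) s := fun s =>
    (((Real.hasDerivAt_cos s).mul_const r).smul_const e).add
      (((Real.hasDerivAt_sin s).mul_const r).smul_const b)
  have d2 : HasDerivAt γ' (-(r • e)) 0 := by
    refine ((((Real.hasDerivAt_sin 0).fun_neg.mul_const r).smul_const e).add
      (((Real.hasDerivAt_cos 0).mul_const r).smul_const b)).congr_deriv ?_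
    simp
  have hn : ∀ s, ‖γ s‖ = ‖γ 0‖ := by
    have : ∀ s, ‖γ s‖ ^ 2 = r ^ 2 := by
      intro s
      rw [hγ]
      simp only
      rw [norm_add_sq_real, norm_smul, norm_smul, inner_smul_left, inner_smul_right, heb, he, hb]
      simp only [Real.norm_eq_abs, mul_one, mul_zero, sq_abs, add_zero]
      linear_combination r ^ 2 * Real.sin_sq_add_cos_sq s
    intro s
    rw [← Real.sqrt_sq (norm_nonneg (γ s)), ← Real.sqrt_sq (norm_nonneg (γ 0)), this, this]
  have hz : ∀ s, fderiv ℝ W (γ s) (γ' s) = 0 := fun s => by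
    have h1 : HasDerivAt (W ∘ γ) (fderiv ℝ W (γ s) (γ' s)) s :=
      (hW1 (γ s)).hasFDerivAt.comp_hasDerivAt s (d1 s)
    have h2 : W ∘ γ = fun _ => W (γ 0) := funext fun s => hrad _ _ (hn s)
    rw [h2] at h1
    exact h1.unique (hasDerivAt_const s _)
  have hD : HasDerivAt (fun s => fderiv ℝ W (γ s)) (fderiv ℝ (fderiv ℝ W) (γ 0) (γ' 0)) 0 :=
    (hW2 (γ 0)).hasFDerivAt.comp_hasDerivAt 0 (d1 0)
  have h3 := hD.clm_apply d2
  have h4 : (fun s => fderiv ℝ W (γ s) (γ' s)) = fun _ => 0 := funext hz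
  rw [h4] at h3
  have h5 := h3.unique (hasDerivAt_const 0 _)
  have g0 : γ 0 = r • e := by simp [hγ]
  have g0' : γ' 0 = r • b := by simp [hγ']
  rw [g0, g0'] at h5
  simp only [map_smul, map_neg, smul_apply, smul_eq_mul] at h5
  have h6 : r * (r * (fderiv ℝ (fderiv ℝ W) (r • e) b b) - fderiv ℝ W (r • e) e) = 0 := by
    linear_combination h5
  rw [eq_div_iff hr.ne']
  have := (mul_eq_zero.1 h6).resolve_left hr.ne'
  linarith

lemma lap_eq_sum_basis {n : ℕ} (W : EuclideanSpace ℝ (Fin n) → ℝ)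
    (b : OrthonormalBasis (Fin n) ℝ (EuclideanSpace ℝ (Fin n))) (x : EuclideanSpace ℝ (Fin n)) :
    lap W x = ∑ i, fderiv ℝ (fderiv ℝ W) x (b i) (b i) := by
  have h1 := congrFun (InnerProductSpace.laplacian_eq_iteratedFDeriv_orthonormalBasis W b) x
  have h2 := congrFun (InnerProductSpace.laplacian_eq_iteratedFDeriv_orthonormalBasis W
    (EuclideanSpace.basisFun (Fin n) ℝ)) x
  rw [h1] at h2
  simp only [iteratedFDeriv_two_apply, EuclideanSpace.basisFun_apply] at h2
  simp only [lap, iteratedFDeriv_two_apply]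
  exact h2.symm

lemma lap_radial_formula {n : ℕ} {W : EuclideanSpace ℝ (Fin n) → ℝ} (hW : ContDiff ℝ 2 W)
    (hrad : ∀ x y, ‖x‖ = ‖y‖ → W x = W y) {e : EuclideanSpace ℝ (Fin n)} (he : ‖e‖ = 1) {r : ℝ}
    (hr : 0 < r) :
    lap W (r • e) = fderiv ℝ (fderiv ℝ W) (r • e) e e +
      ((n : ℝ) - 1) * (fderiv ℝ W (r • e) e / r) := by
  rcases Nat.eq_zero_or_pos n with rfl | hn
  · have : e = 0 := Subsingleton.elim _ _
    simp [this] at he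
  let i0 : Fin n := ⟨0, hn⟩
  have ho : Orthonormal ℝ (({i0} : Set (Fin n)).domRestrict (fun _ => e)) := by
    rw [orthonormal_iff_ite]
    rintro ⟨i, hi⟩ ⟨j, hj⟩
    have : i = j := by rw [Set.mem_singleton_iff.1 hi, Set.mem_singleton_iff.1 hj]
    subst this
    simp [he]
  obtain ⟨b, hb⟩ := ho.exists_orthonormalBasis_extension_of_card_eq (by simp)
  have hb0 : b i0 = e := hb i0 rfl
  rw [lap_eq_sum_basis W b, ← Finset.add_sum_erase _ _ (Finset.mem_univ i0), hb0]
  congr 1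
  rw [Finset.sum_congr rfl (g := fun _ => fderiv ℝ W (r • e) e / r)]
  · rw [Finset.sum_const, Finset.card_erase_of_mem (Finset.mem_univ _), Finset.card_fin,
      nsmul_eq_mul, Nat.cast_sub hn, Nat.cast_one]
  · intro i hi
    refine fderiv_fderiv_tangent hW hrad he (b.orthonormal.1 i) ?_ hr
    rw [← hb0]
    exact b.orthonormal.2 (Finset.ne_of_mem_erase hi).symm

lemma exists_unit_smul {n : ℕ} (hn : 1 ≤ n) (x : EuclideanSpace ℝ (Fin n)) :
    ∃ e : EuclideanSpace ℝ (Fin n), ‖e‖ = 1 ∧ x = ‖x‖ • e := by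
  rcases eq_or_ne x 0 with rfl | hx
  · exact ⟨EuclideanSpace.single ⟨0, hn⟩ 1, by simp, by simp⟩
  · have h : ‖x‖ ≠ 0 := norm_ne_zero_iff.2 hx
    exact ⟨‖x‖⁻¹ • x, by rw [norm_smul, norm_inv, norm_norm, inv_mul_cancel₀ h],
      by rw [smul_smul, mul_inv_cancel₀ h, one_smul]⟩

lemma fderiv_ray_eq {n : ℕ} {W : EuclideanSpace ℝ (Fin n) → ℝ} (hW : Differentiable ℝ W)
    (hrad : ∀ x y, ‖x‖ = ‖y‖ → W x = W y) {e e' : EuclideanSpace ℝ (Fin n)} (he : ‖e‖ = 1)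
    (he' : ‖e'‖ = 1) (r : ℝ) : fderiv ℝ W (r • e) e = fderiv ℝ W (r • e') e' := by
  have h : (fun r : ℝ => W (r • e)) = fun r : ℝ => W (r • e') :=
    funext fun r => hrad _ _ (by rw [norm_smul, norm_smul, he, he'])
  have h1 := hasDerivAt_ray hW e r
  rw [h] at h1
  exact h1.unique (hasDerivAt_ray hW e' r)

lemma hasDerivAt_ray_two {n : ℕ} {W : EuclideanSpace ℝ (Fin n) → ℝ} (hW : ContDiff ℝ 2 W)
    (e : EuclideanSpace ℝ (Fin n)) (r : ℝ) :
    HasDerivAt (fun r : ℝ => fderiv ℝ W (r • e) e) (fderiv ℝ (fderiv ℝ W) (r • e) e e) r := by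
  have h := hasDerivAt_ray ((hW.fderiv_right (m := 1) (by norm_num)).differentiable (by norm_num)) e r
  simpa using h.clm_apply (hasDerivAt_const r e)

/-- The Laplacian of a radial function is radial. -/
lemma lap_radial {n : ℕ} (hn : 1 ≤ n) {W : EuclideanSpace ℝ (Fin n) → ℝ} (hW : ContDiff ℝ 2 W)
    (hrad : ∀ x y, ‖x‖ = ‖y‖ → W x = W y) : ∀ x y, ‖x‖ = ‖y‖ → lap W x = lap W y := by
  intro x y hxy
  obtain ⟨e, he, hxe⟩ := exists_unit_smul hn x
  obtain ⟨e', he', hye⟩ := exists_unit_smul hn y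
  rcases (norm_nonneg x).eq_or_lt with h0 | h0
  · rw [norm_eq_zero.1 h0.symm, norm_eq_zero.1 (hxy.symm.trans h0.symm)]
  have hW1 : Differentiable ℝ W := hW.differentiable (by norm_num)
  have h2 : fderiv ℝ (fderiv ℝ W) (‖x‖ • e) e e = fderiv ℝ (fderiv ℝ W) (‖x‖ • e') e' e' := by
    have h3 := hasDerivAt_ray_two hW e ‖x‖
    have h4 : (fun r : ℝ => fderiv ℝ W (r • e) e) = fun r : ℝ => fderiv ℝ W (r • e') e' :=
      funext fun r => fderiv_ray_eq hW1 hrad he he' r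
    rw [h4] at h3
    exact h3.unique (hasDerivAt_ray_two hW e' ‖x‖)
  have hx2 : lap W x = lap W (‖x‖ • e) := by rw [← hxe]
  have hy2 : lap W y = lap W (‖x‖ • e') := by rw [hxy, ← hye]
  rw [hx2, hy2, lap_radial_formula hW hrad he h0, lap_radial_formula hW hrad he' h0, h2,
    fderiv_ray_eq hW1 hrad he he']

lemma contDiff_lap {n : ℕ} {W : EuclideanSpace ℝ (Fin n) → ℝ} {m : ℕ}
    (hW : ContDiff ℝ (m + 2 : ℕ) W) : ContDiff ℝ m (lap W) := by
  have h1 : ContDiff ℝ (m + 1 : ℕ) (fderiv ℝ W) := hW.fderiv_right (by norm_cast)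
  have h2 : ContDiff ℝ m (fderiv ℝ (fderiv ℝ W)) := h1.fderiv_right (by norm_cast)
  have h3 : lap W = fun x => ∑ i : Fin n, fderiv ℝ (fderiv ℝ W) x (EuclideanSpace.single i 1)
      (EuclideanSpace.single i 1) := by
    funext x
    simp only [lap, iteratedFDeriv_two_apply]
  rw [h3]
  exact ContDiff.sum fun i _ => (h2.clm_apply contDiff_const).clm_apply contDiff_const

/-- The radial profile of a radial function satisfies the radial form of `-ΔW = g`. -/
lemma rstep_of_radial {n : ℕ} (hn : 2 ≤ n) {W : EuclideanSpace ℝ (Fin n) → ℝ}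
    (hW : ContDiff ℝ 2 W) (hrad : ∀ x y, ‖x‖ = ‖y‖ → W x = W y) {e : EuclideanSpace ℝ (Fin n)}
    (he : ‖e‖ = 1) :
    RStep n (fun r => W (r • e)) (fun r => -(r ^ (n - 1) * fderiv ℝ W (r • e) e))
      (fun r => -lap W (r • e)) := by
  obtain ⟨m, rfl⟩ : ∃ m, n = m + 2 := ⟨n - 2, by omega⟩
  have hW1 : Differentiable ℝ W := hW.differentiable (by norm_num)
  have c1 : Continuous (fun r : ℝ => W (r • e)) :=
    continuous_iff_continuousAt.2 fun r => (hasDerivAt_ray hW1 e r).continuousAt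
  have c2 : Continuous (fun r : ℝ => fderiv ℝ W (r • e) e) :=
    continuous_iff_continuousAt.2 fun r => (hasDerivAt_ray_two hW e r).continuousAt
  refine ⟨c1.continuousOn, ((continuous_pow _).mul c2).neg.continuousOn, by simp, fun r hr => ?_,
    fun r hr => ?_⟩
  · refine (hasDerivAt_ray hW1 e r).congr_deriv ?_
    have : r ^ (m + 2 - 1) ≠ 0 := pow_ne_zero _ (ne_of_gt hr)
    field_simp
  · refine (((hasDerivAt_pow (m + 2 - 1) r).mul (hasDerivAt_ray_two hW e r)).fun_neg).congr_deriv ?_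
    rw [lap_radial_formula hW hrad he hr]
    have : r ≠ 0 := ne_of_gt hr
    simp only [show m + 2 - 1 = m + 1 from rfl, Nat.add_sub_cancel]
    push_cast
    field_simp
    ring

lemma iterLap_props {n k : ℕ} (hn : 1 ≤ n) {u : EuclideanSpace ℝ (Fin n) → ℝ}
    (hreg : ContDiff ℝ (2 * k : ℕ) u) (hrad : ∀ x y, ‖x‖ = ‖y‖ → u x = u y) :
    ∀ j ≤ k, ContDiff ℝ (2 * (k - j) : ℕ) (iterLap j u) ∧
      ∀ x y, ‖x‖ = ‖y‖ → iterLap j u x = iterLap j u y := by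
  intro j
  induction j with
  | zero => exact fun _ => ⟨by simpa [iterLap] using hreg, by simpa [iterLap] using hrad⟩
  | succ j ih =>
    intro hj
    obtain ⟨h1, h2⟩ := ih (by omega)
    have e : iterLap (j + 1) u = lap (iterLap j u) := Function.iterate_succ_apply' lap j u
    rw [show 2 * (k - j) = 2 * (k - (j + 1)) + 2 by omega] at h1
    rw [e]
    exact ⟨contDiff_lap h1, lap_radial hn (h1.of_le (by norm_cast; omega)) h2⟩

/-- The functions `(-Δ)^i u`, restricted to a ray, form a chain. -/
lemma chain_of_radial {n k : ℕ} (hn : 2 ≤ n) {u : EuclideanSpace ℝ (Fin n) → ℝ}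
    (hreg : ContDiff ℝ (2 * k : ℕ) u) (hrad : ∀ x y, ‖x‖ = ‖y‖ → u x = u y)
    {e : EuclideanSpace ℝ (Fin n)} (he : ‖e‖ = 1) :
    ∃ P, Chain n k (fun i r => (-1) ^ i * iterLap i u (r • e)) P := by
  refine ⟨fun i r => (-1) ^ i * -(r ^ (n - 1) * fderiv ℝ (iterLap i u) (r • e) e),
    fun i hi => ?_⟩
  obtain ⟨h1, h2⟩ := iterLap_props (by omega) hreg hrad i hi.le
  have h := (rstep_of_radial hn (h1.of_le (by norm_cast; omega)) h2 he).const_mul ((-1) ^ i)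
  refine h.congr_right (funext fun r => ?_)
  simp only
  rw [show iterLap (i + 1) u = lap (iterLap i u) from Function.iterate_succ_apply' lap i u]
  ring

/-! ### Decay from integrability -/

/-- If `φ` and `φ'` have finite weighted `L^{n/α}` and `L^{n/(α+1)}` norms, then
`φ = o(r ^ (-α))` at infinity. -/
lemma decay_of_integrable {n : ℕ} {α : ℝ} (hα : 0 < α) (hn : 2 * α + 1 < n) {φ φ' : ℝ → ℝ}
    (hφ : ∀ r, HasDerivAt φ (φ' r) r) (hc : Continuous φ')
    (h0 : IntegrableOn (fun r => r ^ (n - 1) * |φ r| ^ ((n : ℝ) / α)) (Set.Ioi 0))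
    (h1 : IntegrableOn (fun r => r ^ (n - 1) * |φ' r| ^ ((n : ℝ) / (α + 1))) (Set.Ioi 0)) :
    Tendsto (fun r => r ^ α * φ r) atTop (𝓝 0) := by
  have hcφ : Continuous φ := continuous_iff_continuousAt.2 fun r => (hφ r).continuousAt
  have hn0 : (0 : ℝ) < n := by linarith
  have hn1 : 1 ≤ n := by
    have : (0 : ℕ) < n := by exact_mod_cast hn0
    omega
  set s : ℝ := ((n : ℝ) - 1) / α with hs
  have hs1 : 1 < s := by rw [hs, lt_div_iff₀ hα]; linarith
  set h : ℝ → ℝ := fun r => |φ r| ^ ((n : ℝ) / α) + |φ' r| ^ ((n : ℝ) / (α + 1)) with hh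
  set H : ℝ → ℝ := fun r => r ^ (n - 1) * h r with hH
  have ch : Continuous h := (hcφ.abs.rpow_const fun _ => Or.inr (by positivity)).add
    (hc.abs.rpow_const fun _ => Or.inr (by positivity))
  have cH : Continuous H := (continuous_pow _).mul ch
  have iH : IntegrableOn H (Set.Ioi 0) := by
    refine (h0.add h1).congr (Eventually.of_forall fun r => ?_)
    simp only [hH, hh, Pi.add_apply]
    ring
  have hh0 : ∀ r, 0 ≤ h r := fun r => by positivity
  set I : ℝ := ∫ t in Set.Ioi 0, H t with hI
  set F : ℝ → ℝ := fun r => ∫ t in (0 : ℝ)..r, H t with hF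
  have tF : Tendsto F atTop (𝓝 I) := intervalIntegral_tendsto_integral_Ioi 0 iH tendsto_id
  have hii : ∀ a b, IntervalIntegrable H volume a b := fun a b => cH.intervalIntegrable a b
  have hFsub : ∀ a b, F b - F a = ∫ t in a..b, H t := fun a b =>
    intervalIntegral.integral_interval_sub_left (hii _ _) (hii _ _)
  have mF : ∀ a b, 0 ≤ a → a ≤ b → F a ≤ F b := fun a b ha hab => by
    have := intervalIntegral.integral_nonneg (f := H) (μ := volume) hab fun t ht =>
      mul_nonneg (pow_nonneg (ha.trans ht.1) _) (hh0 t)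
    linarith [hFsub a b]
  have FI : ∀ a, 0 ≤ a → F a ≤ I := fun a ha =>
    ge_of_tendsto tF ((eventually_ge_atTop a).mono fun b hb => mF a b ha hb)
  -- the derivative of `|φ| ^ s` is controlled by `h`, by Young's inequality
  have young : ∀ t, -(s * |φ t| ^ (s - 2) * φ t * φ' t) ≤ s * h t := by
    intro t
    have hpq : ((n : ℝ) / (n - α - 1)).HolderConjugate ((n : ℝ) / (α + 1)) := by
      rw [Real.holderConjugate_iff]
      have : 0 < (n : ℝ) - α - 1 := by linarith
      refine ⟨by rw [lt_div_iff₀ this]; linarith, ?_⟩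
      field_simp
      ring
    have y := Real.young_inequality_of_nonneg (Real.rpow_nonneg (abs_nonneg (φ t)) (s - 1))
      (abs_nonneg (φ' t)) hpq
    have e1 : (|φ t| ^ (s - 1)) ^ ((n : ℝ) / (n - α - 1)) = |φ t| ^ ((n : ℝ) / α) := by
      rw [← Real.rpow_mul (abs_nonneg _)]
      congr 1
      have : (n : ℝ) - α - 1 ≠ 0 := by
        have : 0 < (n : ℝ) - α - 1 := by linarith
        exact this.ne'
      rw [hs]
      field_simp
      ring
    rw [e1] at y
    have y1 : |φ t| ^ ((n : ℝ) / α) / ((n : ℝ) / (n - α - 1)) ≤ |φ t| ^ ((n : ℝ) / α) :=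
      div_le_self (by positivity) hpq.lt.le
    have y2 : |φ' t| ^ ((n : ℝ) / (α + 1)) / ((n : ℝ) / (α + 1)) ≤ |φ' t| ^ ((n : ℝ) / (α + 1)) :=
      div_le_self (by positivity) hpq.symm.lt.le
    have e2 : -(|φ t| ^ (s - 2) * φ t * φ' t) ≤ |φ t| ^ (s - 1) * |φ' t| := by
      refine (neg_le_abs _).trans ?_
      rw [abs_mul, abs_mul, abs_of_nonneg (Real.rpow_nonneg (abs_nonneg (φ t)) (s - 2))]
      refine mul_le_mul_of_nonneg_right ?_ (abs_nonneg _)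
      rcases eq_or_ne (φ t) 0 with hz | hz
      · rw [hz]; simp only [abs_zero, mul_zero]; positivity
      · rw [show s - 1 = s - 2 + 1 by ring, Real.rpow_add (abs_pos.2 hz), Real.rpow_one]
    have : -(|φ t| ^ (s - 2) * φ t * φ' t) ≤ h t := by simp only [hh]; linarith
    calc -(s * |φ t| ^ (s - 2) * φ t * φ' t) = s * -(|φ t| ^ (s - 2) * φ t * φ' t) := by ring
      _ ≤ s * h t := by gcongr
  have step : ∀ r R, 0 < r → r ≤ R → |φ r| ^ s ≤ |φ R| ^ s + s / r ^ (n - 1) * (I - F r) := by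
    intro r R hr hrR
    have hd : ∀ t, HasDerivAt (fun t => -|φ t| ^ s) (-(s * |φ t| ^ (s - 2) * φ t * φ' t)) t :=
      fun t => ((hasDerivAt_abs_rpow (φ t) hs1).comp t (hφ t)).fun_neg
    have key := intervalIntegral.sub_le_integral_of_hasDeriv_right_of_le (φ := fun t =>
      s / r ^ (n - 1) * H t) hrR (fun t _ => (hd t).continuousAt.continuousWithinAt)
      (fun t _ => (hd t).hasDerivWithinAt)
      ((continuous_const.mul cH).continuousOn.integrableOn_Icc) (fun t ht => by
        have h1 : 1 ≤ t ^ (n - 1) / r ^ (n - 1) := by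
          rw [one_le_div (by positivity)]
          exact pow_le_pow_left₀ hr.le ht.1.le _
        have h2 : 0 ≤ s * h t := mul_nonneg (by linarith) (hh0 t)
        calc _ ≤ s * h t := young t
          _ ≤ (t ^ (n - 1) / r ^ (n - 1)) * (s * h t) := le_mul_of_one_le_left h2 h1
          _ = _ := by simp only [hH]; ring)
    rw [intervalIntegral.integral_const_mul, ← hFsub] at key
    have : s / r ^ (n - 1) * (F R - F r) ≤ s / r ^ (n - 1) * (I - F r) := by
      have := FI R (hr.le.trans hrR)
      have : 0 ≤ s / r ^ (n - 1) := by positivity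
      gcongr
    linarith
  have main : ∀ r ≥ 1, r ^ (n - 1) * |φ r| ^ s ≤ s * (I - F r) := by
    intro r hr
    have hr0 : 0 < r := by linarith
    have hle : |φ r| ^ s ≤ s / r ^ (n - 1) * (I - F r) := by
      by_contra! hcon
      -- otherwise `|φ|` stays away from zero on `[r, ∞)`
      set δ := |φ r| ^ s - s / r ^ (n - 1) * (I - F r) with hδ
      have hδ0 : 0 < δ := by rw [hδ]; linarith
      have hlow : ∀ t ∈ Set.Ioi r, δ ^ ((n : ℝ) / α / s) ≤ t ^ (n - 1) * |φ t| ^ ((n : ℝ) / α) := by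
        intro t ht
        have h2 : δ ≤ |φ t| ^ s := by
          have := step r t hr0 (le_of_lt ht)
          rw [hδ]; linarith
        have h3 : δ ^ ((n : ℝ) / α / s) ≤ (|φ t| ^ s) ^ ((n : ℝ) / α / s) :=
          Real.rpow_le_rpow hδ0.le h2 (by positivity)
        rw [← Real.rpow_mul (abs_nonneg _), mul_div_cancel₀ _ (by positivity)] at h3
        have h4 : 1 ≤ t ^ (n - 1) := one_le_pow₀ (hr.le.trans (le_of_lt ht))
        have h5 : 0 ≤ |φ t| ^ ((n : ℝ) / α) := by positivity
        nlinarith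
      have hint : IntegrableOn (fun _ : ℝ => δ ^ ((n : ℝ) / α / s)) (Set.Ioi r) := by
        refine Integrable.mono' (h0.mono_set (Set.Ioi_subset_Ioi hr0.le))
          aestronglyMeasurable_const ?_
        filter_upwards [ae_restrict_mem measurableSet_Ioi] with t ht
        rw [Real.norm_eq_abs, abs_of_pos (Real.rpow_pos_of_pos hδ0 _)]
        exact hlow t ht
      rw [integrableOn_const_iff] at hint
      rcases hint with h6 | h6
      · exact (Real.rpow_pos_of_pos hδ0 _).ne' (by simpa using h6)
      · simp at h6
    calc r ^ (n - 1) * |φ r| ^ s ≤ r ^ (n - 1) * (s / r ^ (n - 1) * (I - F r)) := by gcongr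
      _ = s * (I - F r) := by
        have : r ^ (n - 1) ≠ 0 := by positivity
        field_simp
  have t1 : Tendsto (fun r => (s * (I - F r)) ^ (1 / s)) atTop (𝓝 0) := by
    have : Tendsto (fun r => s * (I - F r)) atTop (𝓝 0) := by
      simpa using (tF.const_sub I).const_mul s
    have h2 := this.rpow_const (p := 1 / s) (Or.inr (by positivity))
    rwa [Real.zero_rpow (by positivity)] at h2
  refine squeeze_zero_norm' ?_ t1
  filter_upwards [eventually_ge_atTop 1] with r hr
  have hr0 : 0 < r := by linarith
  have e : (r ^ (n - 1) * |φ r| ^ s) ^ (1 / s) = r ^ α * |φ r| := by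
    rw [pow_pred_eq_rpow hn1, Real.mul_rpow (by positivity) (by positivity),
      ← Real.rpow_mul (abs_nonneg _), mul_one_div_cancel (by positivity), Real.rpow_one,
      ← Real.rpow_mul hr0.le]
    congr 2
    have : (n : ℝ) - 1 ≠ 0 := by
      have : 0 < (n : ℝ) - 1 := by linarith
      exact this.ne'
    rw [hs]
    field_simp
  rw [Real.norm_eq_abs, abs_mul, abs_of_pos (Real.rpow_pos_of_pos hr0 _), ← e]
  exact Real.rpow_le_rpow (by positivity) (main r hr) (by positivity)

/-! ### The classification -/

/-- The restriction of `u` to a ray solves the radial problem. -/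
lemma exists_sol {n k : ℕ} {α : ℝ} (hk : 1 ≤ k) (hα : 0 < α) (hn : (n : ℝ) = 2 * k + 2 * α)
    {u : EuclideanSpace ℝ (Fin n) → ℝ} (hreg : ContDiff ℝ (2 * k : ℕ) u)
    (hrad : ∀ x y, ‖x‖ = ‖y‖ → u x = u y)
    (hpde : ∀ x, iterLap k u x = |u x| ^ (2 * k / α) * u x)
    (h0 : Integrable fun x => |u x| ^ ((n : ℝ) / α))
    (h1 : Integrable fun x => ‖fderiv ℝ u x‖ ^ ((n : ℝ) / (α + 1)))
    {e : EuclideanSpace ℝ (Fin n)} (he : ‖e‖ = 1) :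
    ∃ φ P, Sol n k α φ P ∧ ∀ r, φ 0 r = u (r • e) := by
  have hk' : (1 : ℝ) ≤ k := by exact_mod_cast hk
  have hn2 : 2 ≤ n := by
    have : (2 : ℝ) ≤ n := by linarith
    exact_mod_cast this
  obtain ⟨P, hP⟩ := chain_of_radial hn2 hreg hrad he
  have hu2 : ContDiff ℝ 2 u := hreg.of_le (by norm_cast; omega)
  have hu1 : Differentiable ℝ u := hu2.differentiable (by norm_num)
  have hφc : Continuous fun r : ℝ => fderiv ℝ u (r • e) e :=
    continuous_iff_continuousAt.2 fun r => (hasDerivAt_ray_two hu2 e r).continuousAt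
  have hfr : Module.finrank ℝ (EuclideanSpace ℝ (Fin n)) = n := finrank_euclideanSpace_fin
  have : Nontrivial (EuclideanSpace ℝ (Fin n)) :=
    Module.nontrivial_of_finrank_pos (R := ℝ) (by rw [hfr]; omega)
  have i0 : IntegrableOn (fun r : ℝ => r ^ (n - 1) * |u (r • e)| ^ ((n : ℝ) / α)) (Set.Ioi 0) := by
    have := (integrable_fun_norm_addHaar (E := EuclideanSpace ℝ (Fin n)) volume
      (f := fun r : ℝ => |u (r • e)| ^ ((n : ℝ) / α))).1 (h0.congr (Eventually.of_forall fun x => by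
        simp only
        rw [hrad x (‖x‖ • e) (by rw [norm_smul, he, norm_norm, mul_one])]))
    simpa only [hfr, smul_eq_mul] using this
  have i1 : IntegrableOn (fun r : ℝ => r ^ (n - 1) *
      |fderiv ℝ u (r • e) e| ^ ((n : ℝ) / (α + 1))) (Set.Ioi 0) := by
    have := (integrable_fun_norm_addHaar (E := EuclideanSpace ℝ (Fin n)) volume
      (f := fun r : ℝ => |fderiv ℝ u (r • e) e| ^ ((n : ℝ) / (α + 1)))).1 (h1.mono' ?_ ?_)
    · simpa only [hfr, smul_eq_mul] using this
    · refine Continuous.aestronglyMeasurable ?_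
      exact ((hφc.comp continuous_norm).abs.rpow_const fun _ => Or.inr (by positivity))
    · refine Eventually.of_forall fun x => ?_
      obtain ⟨e', he', hx⟩ := exists_unit_smul (by omega) x
      rw [Real.norm_eq_abs, abs_of_nonneg (by positivity), fderiv_ray_eq hu1 hrad he he', ← hx]
      refine Real.rpow_le_rpow (abs_nonneg _) ?_ (by positivity)
      simpa [he'] using (fderiv ℝ u x).le_opNorm e'
  refine ⟨_, P, ⟨hP, fun r _ => ?_, ?_⟩, fun r => ?_⟩
  · simp only [pow_zero, one_mul]
    rw [hpde (r • e)]
    rfl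
  · simpa [iterLap] using
      decay_of_integrable hα (by linarith) (fun r => hasDerivAt_ray hu1 e r) hφc i0 i1
  · simp [iterLap]

lemma ank_pow {n k : ℕ} {α : ℝ} (hk : 1 ≤ k) (hα : 0 < α) (hn : (n : ℝ) = 2 * k + 2 * α) :
    0 < ank n k ∧ ank n k ^ k * ∏ j ∈ Finset.range (2 * k), (2 * α + 2 * (j : ℝ)) = 1 := by
  have e : ank n k = (∏ j ∈ Finset.range (2 * k), (2 * α + 2 * (j : ℝ))) ^ (-(1 : ℝ) / (k : ℝ)) := by
    rw [ank, hn]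
    congr 1
    exact Finset.prod_congr rfl fun j _ => by ring
  have hp : 0 < ∏ j ∈ Finset.range (2 * k), (2 * α + 2 * (j : ℝ)) :=
    Finset.prod_pos fun j _ => by positivity
  have hk0 : (k : ℝ) ≠ 0 := by positivity
  refine ⟨by rw [e]; positivity, ?_⟩
  rw [e, ← Real.rpow_natCast, ← Real.rpow_mul hp.le, div_mul_cancel₀ _ hk0, Real.rpow_neg_one,
    inv_mul_cancel₀ hp.ne']

theorem stmt5 (n k : ℕ) (hk : 2 ≤ 2 * k) (hn : 2 * k < n)
    (u : EuclideanSpace ℝ (Fin n) → ℝ)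
    (hreg : ContDiff ℝ (2 * k : ℕ) u)
    (hrad : ∀ x y : EuclideanSpace ℝ (Fin n), ‖x‖ = ‖y‖ → u x = u y)
    (hpde : ∀ x : EuclideanSpace ℝ (Fin n),
      iterLap k u x = |u x| ^ (twoStar n k - 2) * u x)
    (hint : ∀ l ≤ k,
      MeasureTheory.Integrable (fun x : EuclideanSpace ℝ (Fin n) =>
        ‖iteratedFDeriv ℝ l u x‖ ^ (2 * (n : ℝ) / ((n : ℝ) - 2 * ((k : ℝ) - (l : ℝ)))))) :
    ∃ μ : ℝ, 0 < μ ∧ ∃ ε : ℝ, (ε = -1 ∨ ε = 0 ∨ ε = 1) ∧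
      ∀ x : EuclideanSpace ℝ (Fin n),
        u x = ε * (μ / (μ ^ 2 + ank n k * ‖x‖ ^ 2)) ^ (((n : ℝ) - 2 * k) / 2) := by
  have hk1 : 1 ≤ k := by omega
  have hk' : (1 : ℝ) ≤ k := by exact_mod_cast hk1
  have hn' : (2 * k : ℝ) < n := by exact_mod_cast hn
  obtain ⟨α, hαdef⟩ : ∃ α : ℝ, α = ((n : ℝ) - 2 * k) / 2 := ⟨_, rfl⟩
  have hα : 0 < α := by rw [hαdef]; linarith
  have hnα : (n : ℝ) = 2 * k + 2 * α := by rw [hαdef]; ring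
  rw [← hαdef]
  have htw : twoStar n k - 2 = 2 * k / α := by
    rw [twoStar, show (n : ℝ) - 2 * k = 2 * α by rw [hnα]; ring, hnα]
    field_simp
    ring
  have hpde' : ∀ x, iterLap k u x = |u x| ^ (2 * k / α) * u x := fun x => by rw [← htw, hpde]
  have h0 : Integrable fun x => |u x| ^ ((n : ℝ) / α) := by
    have h := hint 0 (by omega)
    rw [show 2 * (n : ℝ) / ((n : ℝ) - 2 * ((k : ℝ) - ((0 : ℕ) : ℝ))) = n / α by
      rw [show (n : ℝ) - 2 * ((k : ℝ) - ((0 : ℕ) : ℝ)) = 2 * α by rw [hnα]; push_cast; ring]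
      exact mul_div_mul_left _ _ two_ne_zero] at h
    simpa only [norm_iteratedFDeriv_zero, Real.norm_eq_abs] using h
  have h1 : Integrable fun x => ‖fderiv ℝ u x‖ ^ ((n : ℝ) / (α + 1)) := by
    have h := hint 1 hk1
    rw [show 2 * (n : ℝ) / ((n : ℝ) - 2 * ((k : ℝ) - ((1 : ℕ) : ℝ))) = n / (α + 1) by
      rw [show (n : ℝ) - 2 * ((k : ℝ) - ((1 : ℕ) : ℝ)) = 2 * (α + 1) by rw [hnα]; push_cast; ring]
      exact mul_div_mul_left _ _ two_ne_zero] at h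
    simpa only [norm_iteratedFDeriv_one] using h
  obtain ⟨ha, hak⟩ := ank_pow hk1 hα hnα
  have hex : ∀ x : EuclideanSpace ℝ (Fin n), ∃ e : EuclideanSpace ℝ (Fin n),
      ‖e‖ = 1 ∧ x = ‖x‖ • e := exists_unit_smul (by omega)
  by_cases hcase : Odd k ∨ u 0 = 0
  · -- the comparison with the trivial solution
    have hzero : Sol n k α (fun _ _ => 0) (fun _ _ => 0) :=
      ⟨fun _ _ => RStep.zero n, fun r _ => by simp, by simp⟩
    refine ⟨1, one_pos, 0, Or.inr (Or.inl rfl), fun x => ?_⟩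
    rw [zero_mul]
    have hx0 : ∀ y, y ≠ 0 → u y = 0 := by
      intro y hy
      obtain ⟨e, he, hye⟩ := hex y
      obtain ⟨φ, P, hS, hφ⟩ := exists_sol hk1 hα hnα hreg hrad hpde' h0 h1 he
      have := hS.unique hk1 hα hnα hzero (hcase.imp_right fun h => by rw [hφ, zero_smul, h])
        ‖y‖ (norm_pos_iff.2 hy)
      rw [hφ, ← hye] at this
      exact this
    rcases eq_or_ne x 0 with rfl | hx
    · obtain ⟨e, he, -⟩ := hex 0
      have hc : ContinuousWithinAt (fun r : ℝ => u (r • e)) (Set.Ioi 0) 0 :=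
        (hasDerivAt_ray (hreg.differentiable (by norm_cast; omega)) e 0).continuousAt.continuousWithinAt
      have hl : Tendsto (fun r : ℝ => u (r • e)) (𝓝[>] 0) (𝓝 (u 0)) := by
        simpa [ContinuousWithinAt] using hc
      refine tendsto_nhds_unique hl (tendsto_const_nhds.congr' ?_)
      filter_upwards [self_mem_nhdsWithin] with r hr
      refine (hx0 _ (smul_ne_zero (ne_of_gt hr) ?_)).symm
      rintro rfl
      simp at he
    · exact hx0 x hx
  · push Not at hcase
    obtain ⟨hodd, hu0⟩ := hcase
    have hev : Even k := Nat.not_odd_iff_even.1 hodd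
    -- the scale for which the bubble has height `|u 0|` at the origin
    set μ : ℝ := |u 0| ^ (-(1 / α)) with hμdef
    have hμ : 0 < μ := Real.rpow_pos_of_pos (abs_pos.2 hu0) _
    obtain ⟨ε, hε, hεu⟩ : ∃ ε : ℝ, (ε = -1 ∨ ε = 1) ∧ ε * |u 0| = u 0 := by
      rcases lt_or_gt_of_ne hu0 with h | h
      · exact ⟨-1, Or.inl rfl, by rw [abs_of_neg h]; ring⟩
      · exact ⟨1, Or.inr rfl, by rw [abs_of_pos h]; ring⟩
    have hεa : |ε| = 1 := by rcases hε with rfl | rfl <;> simp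
    have hval : ε * (μ / (μ ^ 2 + ank n k * 0 ^ 2)) ^ α = u 0 := by
      have : μ / (μ ^ 2 + ank n k * 0 ^ 2) = |u 0| ^ (1 / α) := by
        have h2 : μ / (μ ^ 2 + ank n k * 0 ^ 2) = μ⁻¹ := by
          field_simp
          ring
        rw [h2, hμdef, Real.rpow_neg (abs_nonneg _), inv_inv]
      rw [this, ← Real.rpow_mul (abs_nonneg _), one_div_mul_cancel hα.ne', Real.rpow_one, hεu]
    refine ⟨μ, hμ, ε, hε.imp_right Or.inr, fun x => ?_⟩
    rcases eq_or_ne x 0 with rfl | hx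
    · rw [norm_zero, hval]
    · obtain ⟨e, he, hxe⟩ := hex x
      obtain ⟨φ, P, hS, hφ⟩ := exists_sol hk1 hα hnα hreg hrad hpde' h0 h1 he
      obtain ⟨ψ, Q, hB, hψ⟩ := exists_bubble hk1 hev hα hnα ha hak hμ hεa
      have := hS.unique hk1 hα hnα hB (Or.inr (by rw [hφ, hψ, zero_smul, hval]))
        ‖x‖ (norm_pos_iff.2 hx)
      rw [hφ, hψ, ← hxe] at this
      exact this
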